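/- Let K be an algebraically closed field of characteristic 0 or at least 11, and let f ∈ K[X,Z] be a squarefree binary octic with Shioda invariants J₂,…,J₁₀. Then the conditions 30·J₃(f)² = J₂(f)³ and J₄(f) = J₅(f) = J₆(f) = J₇(f) = J₈(f) = J₉(f) = J₁₀(f) = 0 hold if and only if f is GL₂(K)-equivalent to X⁸ + 14·X⁴Z⁴ + Z⁸; equivalently, the genus-3 hyperelliptic curve y² = f(x,1) has automorphism group C₂ × S₄ if and only if these relations hold, and such a curve is K-isomorphic to y² = x⁸ + 14x⁴ + 1. -/

import Mathlib

open MvPolynomial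

/-- Iterated partial derivative in the variable `x` (the variable `0`). -/
noncomputable def dX {k : Type*} [CommSemiring k] (n : ℕ) (p : MvPolynomial (Fin 2) k) :
    MvPolynomial (Fin 2) k :=
  (fun q => pderiv (0 : Fin 2) q)^[n] p

/-- Iterated partial derivative in the variable `z` (the variable `1`). -/
noncomputable def dZ {k : Type*} [CommSemiring k] (n : ℕ) (p : MvPolynomial (Fin 2) k) :
    MvPolynomial (Fin 2) k :=
  (fun q => pderiv (1 : Fin 2) q)^[n] p

/-- The `h`-th transvectant of two binary forms of degrees `r₁` and `r₂`. -/
noncomputable def transvectant {k : Type*} [Field k] (r₁ r₂ h : ℕ)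
    (f g : MvPolynomial (Fin 2) k) : MvPolynomial (Fin 2) k :=
  C ((((r₁ - h).factorial * (r₂ - h).factorial : ℕ) : k) /
      (((r₁.factorial * r₂.factorial : ℕ)) : k)) *
    ∑ j ∈ Finset.range (h + 1),
      C ((-1 : k) ^ j * (h.choose j : k)) * (dX (h - j) (dZ j f) * dX j (dZ (h - j) g))

section Shioda

variable {k : Type*} [Field k]

/-- The covariant `𝔤 = (f,f)₄` of a binary octic. -/
noncomputable def covG (f : MvPolynomial (Fin 2) k) := transvectant 8 8 4 f f

/-- The covariant `𝔨 = (f,f)₆` of a binary octic. -/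
noncomputable def covK (f : MvPolynomial (Fin 2) k) := transvectant 8 8 6 f f

/-- The covariant `𝔥 = (𝔨,𝔨)₂` of a binary octic. -/
noncomputable def covH (f : MvPolynomial (Fin 2) k) := transvectant 4 4 2 (covK f) (covK f)

/-- The covariant `𝔪 = (f,𝔨)₄` of a binary octic. -/
noncomputable def covM (f : MvPolynomial (Fin 2) k) := transvectant 8 4 4 f (covK f)

/-- The covariant `𝔫 = (f,𝔥)₄` of a binary octic. -/
noncomputable def covN (f : MvPolynomial (Fin 2) k) := transvectant 8 4 4 f (covH f)

/-- The covariant `𝔭 = (𝔤,𝔨)₄` of a binary octic. -/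
noncomputable def covP (f : MvPolynomial (Fin 2) k) := transvectant 8 4 4 (covG f) (covK f)

/-- The covariant `𝔮 = (𝔤,𝔥)₄` of a binary octic. -/
noncomputable def covQ (f : MvPolynomial (Fin 2) k) := transvectant 8 4 4 (covG f) (covH f)

/-- The Shioda invariant `J₂ = (f,f)₈`. -/
noncomputable def shJ2 (f : MvPolynomial (Fin 2) k) : k :=
  constantCoeff (transvectant 8 8 8 f f)

/-- The Shioda invariant `J₃ = (f,𝔤)₈`. -/
noncomputable def shJ3 (f : MvPolynomial (Fin 2) k) : k :=
  constantCoeff (transvectant 8 8 8 f (covG f))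

/-- The Shioda invariant `J₄ = (𝔨,𝔨)₄`. -/
noncomputable def shJ4 (f : MvPolynomial (Fin 2) k) : k :=
  constantCoeff (transvectant 4 4 4 (covK f) (covK f))

/-- The Shioda invariant `J₅ = (𝔪,𝔨)₄`. -/
noncomputable def shJ5 (f : MvPolynomial (Fin 2) k) : k :=
  constantCoeff (transvectant 4 4 4 (covM f) (covK f))

/-- The Shioda invariant `J₆ = (𝔨,𝔥)₄`. -/
noncomputable def shJ6 (f : MvPolynomial (Fin 2) k) : k :=
  constantCoeff (transvectant 4 4 4 (covK f) (covH f))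

/-- The Shioda invariant `J₇ = (𝔪,𝔥)₄`. -/
noncomputable def shJ7 (f : MvPolynomial (Fin 2) k) : k :=
  constantCoeff (transvectant 4 4 4 (covM f) (covH f))

/-- The Shioda invariant `J₈ = (𝔭,𝔥)₄`. -/
noncomputable def shJ8 (f : MvPolynomial (Fin 2) k) : k :=
  constantCoeff (transvectant 4 4 4 (covP f) (covH f))

/-- The Shioda invariant `J₉ = (𝔫,𝔥)₄`. -/
noncomputable def shJ9 (f : MvPolynomial (Fin 2) k) : k :=
  constantCoeff (transvectant 4 4 4 (covN f) (covH f))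

/-- The Shioda invariant `J₁₀ = (𝔮,𝔥)₄`. -/
noncomputable def shJ10 (f : MvPolynomial (Fin 2) k) : k :=
  constantCoeff (transvectant 4 4 4 (covQ f) (covH f))

end Shioda

/-!
A binary quartic whose two invariants vanish has a triple root, so `J₄ = J₆ = 0` allows one to take
`𝔨 = k₀X⁴ + 4k₁X³Z`. If `k₁ ≠ 0`, then `J₉ = J₇ = 0` force a double root of `f` at infinity; hence
`k₁ = 0`. Now `J₅ = 0` (or any root of `f` when `𝔨 = 0`) provides a root of `f` at infinity, and
killing the coefficient of `X²Z⁶` by a shear leaves a family in two parameters `β, γ`, on which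
`30 J₃² = J₂³` becomes `β³ (γ² + 16 β³)² = 0`. On the discriminant locus `γ² + 16 β³ = 0` the octic
has a sextuple root, and for `β = 0` it is the cube `X⁸ + 14X⁴Z⁴ + Z⁸` in coordinates with two
opposite vertices at zero and infinity. Conversely, `𝔨` vanishes for the cube.
-/

section Factorial

variable {R : Type*} [CommRing R]

lemma ofNat_ne_zero_of_factorial_ne_zero {n p : ℕ} [p.AtLeastTwo] (hn : (n.factorial : R) ≠ 0)
    (h : p ≤ n) : (OfNat.ofNat p : R) ≠ 0 :=
  mod_cast ne_zero_of_dvd_ne_zero hn (Nat.cast_dvd_cast (Nat.dvd_factorial (NeZero.pos p) h))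

lemma factorial_ne_zero_of_le {m n : ℕ} (h : m ≤ n) (hn : (n.factorial : R) ≠ 0) :
    (m.factorial : R) ≠ 0 :=
  ne_zero_of_dvd_ne_zero hn (Nat.cast_dvd_cast (Nat.factorial_dvd_factorial h))

lemma factorial_eight_ne_zero_of_ringChar [IsDomain R]
    (hchar : ringChar R = 0 ∨ 11 ≤ ringChar R) : (Nat.factorial 8 : R) ≠ 0 := by
  rw [Ne, ringChar.spec]
  intro hdvd
  obtain h0 | hprime := CharP.char_is_prime_or_zero R (ringChar R) |>.symm
  · simp [h0, Nat.factorial_ne_zero] at hdvd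
  · have hle : ringChar R ≤ 8 := hprime.dvd_factorial.1 hdvd
    have hpos : 0 < ringChar R := hprime.pos
    lia

end Factorial

section LinearSubstitution

variable {R : Type*} [CommRing R]

/-- The action of a `2 × 2` matrix on binary forms, `f(X, Z) ↦ f(aX + bZ, cX + dZ)`. It is a right
action: the matrix of a composite is the product in the opposite order. -/
noncomputable def linearSubst (M : Matrix (Fin 2) (Fin 2) R) :
    MvPolynomial (Fin 2) R →ₐ[R] MvPolynomial (Fin 2) R :=
  bind₁ fun j => C (M j 0) * X 0 + C (M j 1) * X 1

@[simp]
lemma linearSubst_X (M : Matrix (Fin 2) (Fin 2) R) (j : Fin 2) :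
    linearSubst M (X j) = C (M j 0) * X 0 + C (M j 1) * X 1 := by
  simp [linearSubst]

@[simp]
lemma linearSubst_C (M : Matrix (Fin 2) (Fin 2) R) (c : R) : linearSubst M (C c) = C c := by
  simp [linearSubst]

lemma linearSubst_linearSubst (M N : Matrix (Fin 2) (Fin 2) R) (f : MvPolynomial (Fin 2) R) :
    linearSubst M (linearSubst N f) = linearSubst (N * M) f := by
  suffices (linearSubst M).comp (linearSubst N) = linearSubst (N * M) from DFunLike.congr_fun this f
  ext1 j
  simp only [AlgHom.comp_apply, linearSubst_X, map_add, map_mul, linearSubst_C, Matrix.mul_apply,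
    Fin.sum_univ_two]
  ring

lemma linearSubst_one (f : MvPolynomial (Fin 2) R) : linearSubst 1 f = f := by
  suffices linearSubst (1 : Matrix (Fin 2) (Fin 2) R) = AlgHom.id R _ from
    DFunLike.congr_fun this f
  ext1 j
  fin_cases j <;> simp

lemma linearSubst_inv_linearSubst {M : Matrix (Fin 2) (Fin 2) R} (hM : IsUnit M.det)
    (f : MvPolynomial (Fin 2) R) : linearSubst M⁻¹ (linearSubst M f) = f := by
  rw [linearSubst_linearSubst, M.mul_nonsing_inv hM, linearSubst_one]

lemma squarefree_linearSubst {M : Matrix (Fin 2) (Fin 2) R} (hM : IsUnit M.det)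
    {f : MvPolynomial (Fin 2) R} (hf : Squarefree f) : Squarefree (linearSubst M f) := by
  intro g hg
  have hdvd := map_dvd (linearSubst M⁻¹) hg
  rw [map_mul, linearSubst_inv_linearSubst hM] at hdvd
  have hunit := (hf _ hdvd).map (linearSubst M)
  rwa [linearSubst_linearSubst, M.nonsing_inv_mul hM, linearSubst_one] at hunit

@[simp]
lemma constantCoeff_linearSubst (M : Matrix (Fin 2) (Fin 2) R) (f : MvPolynomial (Fin 2) R) :
    constantCoeff (linearSubst M f) = constantCoeff f := by
  simp only [linearSubst]
  induction f using MvPolynomial.induction_on <;> simp_all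

lemma pderiv_linearSubst (M : Matrix (Fin 2) (Fin 2) R) (i : Fin 2)
    (f : MvPolynomial (Fin 2) R) :
    pderiv i (linearSubst M f) =
      M 0 i • linearSubst M (pderiv 0 f) + M 1 i • linearSubst M (pderiv 1 f) := by
  simp only [smul_eq_C_mul]
  induction f using MvPolynomial.induction_on with
  | C a => simp
  | add p q hp hq => simp only [map_add, hp, hq]; ring
  | mul_X p j hp =>
    simp only [map_mul, Derivation.leibniz, hp, smul_eq_mul, map_add, linearSubst_X, pderiv_C]
    fin_cases i <;> fin_cases j <;> simp [pderiv_X] <;> ring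

lemma eval_linearSubst (M : Matrix (Fin 2) (Fin 2) R) (f : MvPolynomial (Fin 2) R)
    (v : Fin 2 → R) : eval v (linearSubst M f) = eval (M.mulVec v) f := by
  have hM : ∀ j, M.mulVec v j = M j 0 * v 0 + M j 1 * v 1 := fun j => by
    rw [Matrix.mulVec, dotProduct, Fin.sum_univ_two]
  induction f using MvPolynomial.induction_on with
  | C c => simp
  | add p q hp hq => simp only [map_add, hp, hq]
  | mul_X p j hp => simp only [map_mul, hp, linearSubst_X, map_add, eval_C, eval_X, hM]

end LinearSubstitution

section CayleyOmega

open scoped TensorProduct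

variable {R : Type*} [CommRing R]

lemma commute_pderiv {σ : Type*} (i j : σ) :
    Commute ((pderiv i).toLinearMap : Module.End R (MvPolynomial σ R)) (pderiv j).toLinearMap := by
  classical
  have : ⁅pderiv (R := R) i, pderiv (R := R) j⁆ = 0 :=
    derivation_ext fun l => by
      simp [Derivation.commutator_apply, pderiv_X, Pi.single_apply, apply_ite]
  exact LinearMap.ext fun f => sub_eq_zero.1 (DFunLike.congr_fun this f)

/-- Cayley's `Ω`-process `∂ₓ ⊗ ∂_z - ∂_z ⊗ ∂ₓ`, with the product of a form in `(x₁, z₁)` and a form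
in `(x₂, z₂)` encoded as a pure tensor. Its `h`-th power, followed by multiplication, is up to a
constant the `h`-th transvectant. -/
noncomputable def cayleyOmega (R : Type*) [CommRing R] :
    Module.End R (MvPolynomial (Fin 2) R ⊗[R] MvPolynomial (Fin 2) R) :=
  (-1 : R) • TensorProduct.map (pderiv 1).toLinearMap (pderiv 0).toLinearMap +
    TensorProduct.map (pderiv 0).toLinearMap (pderiv 1).toLinearMap

lemma cayleyOmega_map_linearSubst (M : Matrix (Fin 2) (Fin 2) R)
    (t : MvPolynomial (Fin 2) R ⊗[R] MvPolynomial (Fin 2) R) :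
    cayleyOmega R (TensorProduct.map (linearSubst M).toLinearMap (linearSubst M).toLinearMap t) =
      M.det •
        TensorProduct.map (linearSubst M).toLinearMap (linearSubst M).toLinearMap
          (cayleyOmega R t) := by
  induction t using TensorProduct.induction_on with
  | zero => simp
  | add s t hs ht => simp only [map_add, smul_add, hs, ht]
  | tmul f g =>
    simp only [cayleyOmega, LinearMap.add_apply, LinearMap.smul_apply, TensorProduct.map_tmul,
      map_add, map_smul, AlgHom.toLinearMap_apply, Derivation.coeFn_coe, pderiv_linearSubst,
      Matrix.det_fin_two, TensorProduct.tmul_add, TensorProduct.add_tmul,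
      ← TensorProduct.smul_tmul', TensorProduct.tmul_smul]
    module

lemma cayleyOmega_pow_map_linearSubst (M : Matrix (Fin 2) (Fin 2) R) (h : ℕ)
    (t : MvPolynomial (Fin 2) R ⊗[R] MvPolynomial (Fin 2) R) :
    (cayleyOmega R ^ h)
        (TensorProduct.map (linearSubst M).toLinearMap (linearSubst M).toLinearMap t) =
      M.det ^ h •
        TensorProduct.map (linearSubst M).toLinearMap (linearSubst M).toLinearMap
          ((cayleyOmega R ^ h) t) := by
  induction h with
  | zero => simp
  | succ h ih =>
    rw [pow_succ', Module.End.mul_apply, ih, map_smul, cayleyOmega_map_linearSubst,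
      Module.End.mul_apply, smul_smul, pow_succ]

lemma dX_eq_pow (n : ℕ) (f : MvPolynomial (Fin 2) R) :
    dX n f = ((pderiv 0).toLinearMap ^ n : Module.End R _) f := by
  rw [Module.End.pow_apply]
  rfl

lemma dZ_eq_pow (n : ℕ) (f : MvPolynomial (Fin 2) R) :
    dZ n f = ((pderiv 1).toLinearMap ^ n : Module.End R _) f := by
  rw [Module.End.pow_apply]
  rfl

lemma dX_dZ_comm (m n : ℕ) (f : MvPolynomial (Fin 2) R) : dX m (dZ n f) = dZ n (dX m f) := by
  simpa only [dX_eq_pow, dZ_eq_pow, Module.End.mul_apply] using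
    DFunLike.congr_fun ((commute_pderiv (R := R) (0 : Fin 2) 1).pow_pow m n).eq f

lemma mul'_cayleyOmega_pow (h : ℕ) (f g : MvPolynomial (Fin 2) R) :
    LinearMap.mul' R _ ((cayleyOmega R ^ h) (f ⊗ₜ[R] g)) =
      ∑ j ∈ Finset.range (h + 1),
        C ((-1 : R) ^ j * (h.choose j : R)) * (dX (h - j) (dZ j f) * dX j (dZ (h - j) g)) := by
  have hcomm : Commute
      (TensorProduct.map (pderiv 1).toLinearMap (pderiv 0).toLinearMap :
        Module.End R (MvPolynomial (Fin 2) R ⊗[R] MvPolynomial (Fin 2) R))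
      (TensorProduct.map (pderiv 0).toLinearMap (pderiv 1).toLinearMap) := by
    rw [Commute, SemiconjBy, ← TensorProduct.map_mul, ← TensorProduct.map_mul,
      (commute_pderiv (0 : Fin 2) 1).eq]
  rw [cayleyOmega, (hcomm.smul_left (-1 : R)).add_pow, LinearMap.sum_apply, map_sum]
  refine Finset.sum_congr rfl fun j _ => ?_
  rw [dX_dZ_comm, dZ_eq_pow, dX_eq_pow, dX_eq_pow, dZ_eq_pow, smul_pow, TensorProduct.map_pow,
    TensorProduct.map_pow, Module.End.mul_apply, Module.End.natCast_apply,
    ← Nat.cast_smul_eq_nsmul R]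
  simp only [map_smul, Module.End.mul_apply, LinearMap.smul_apply, TensorProduct.map_tmul,
    LinearMap.mul'_apply, smul_smul, smul_eq_C_mul, mul_comm ((-1 : R) ^ j)]

end CayleyOmega

section Transvectant

open scoped TensorProduct

variable {K : Type*} [Field K]

lemma transvectant_eq_smul_cayleyOmega_pow (r₁ r₂ h : ℕ) (f g : MvPolynomial (Fin 2) K) :
    transvectant r₁ r₂ h f g =
      ((((r₁ - h).factorial * (r₂ - h).factorial : ℕ) : K) /
        ((r₁.factorial * r₂.factorial : ℕ) : K)) •
        LinearMap.mul' K _ ((cayleyOmega K ^ h) (f ⊗ₜ[K] g)) := by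
  rw [mul'_cayleyOmega_pow, smul_eq_C_mul, transvectant]

lemma transvectant_linearSubst (M : Matrix (Fin 2) (Fin 2) K) (r₁ r₂ h : ℕ)
    (f g : MvPolynomial (Fin 2) K) :
    transvectant r₁ r₂ h (linearSubst M f) (linearSubst M g) =
      C (M.det ^ h) * linearSubst M (transvectant r₁ r₂ h f g) := by
  have mul'_map (t) : LinearMap.mul' K _ (TensorProduct.map (linearSubst M).toLinearMap
      (linearSubst M).toLinearMap t) = linearSubst M (LinearMap.mul' K _ t) := by
    induction t using TensorProduct.induction_on with
    | zero => simp
    | tmul p q => simp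
    | add s t hs ht => simp only [map_add, hs, ht]
  have key := cayleyOmega_pow_map_linearSubst M h (f ⊗ₜ[K] g)
  rw [TensorProduct.map_tmul, AlgHom.toLinearMap_apply, AlgHom.toLinearMap_apply] at key
  rw [transvectant_eq_smul_cayleyOmega_pow, transvectant_eq_smul_cayleyOmega_pow, key, map_smul,
    mul'_map, map_smul, ← smul_eq_C_mul, smul_comm]

lemma transvectant_C_mul_left (r₁ r₂ h : ℕ) (c : K) (f g : MvPolynomial (Fin 2) K) :
    transvectant r₁ r₂ h (C c * f) g = C c * transvectant r₁ r₂ h f g := by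
  rw [transvectant_eq_smul_cayleyOmega_pow, transvectant_eq_smul_cayleyOmega_pow, ← smul_eq_C_mul,
    ← smul_eq_C_mul, ← TensorProduct.smul_tmul', map_smul, map_smul, smul_comm]

lemma transvectant_C_mul_right (r₁ r₂ h : ℕ) (c : K) (f g : MvPolynomial (Fin 2) K) :
    transvectant r₁ r₂ h f (C c * g) = C c * transvectant r₁ r₂ h f g := by
  rw [transvectant_eq_smul_cayleyOmega_pow, transvectant_eq_smul_cayleyOmega_pow, ← smul_eq_C_mul,
    ← smul_eq_C_mul, TensorProduct.tmul_smul, map_smul, map_smul, smul_comm]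

lemma transvectant_zero_left (r₁ r₂ h : ℕ) (g : MvPolynomial (Fin 2) K) :
    transvectant r₁ r₂ h 0 g = 0 := by
  simpa using transvectant_C_mul_left r₁ r₂ h 0 0 g

lemma transvectant_zero_right (r₁ r₂ h : ℕ) (f : MvPolynomial (Fin 2) K) :
    transvectant r₁ r₂ h f 0 = 0 := by
  simpa using transvectant_C_mul_right r₁ r₂ h 0 f 0

end Transvectant

section BinaryForm

open Finset

variable {R : Type*} [CommRing R]

/-- The binary form of degree `n` with coefficients `a 0, …, a n`, the powers of `X` decreasing, in
the classical normalisation that attaches a binomial coefficient to every `a i`. The values `a i`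
with `i > n` play no role. -/
noncomputable def binaryForm (n : ℕ) : (ℕ → R) →ₗ[R] MvPolynomial (Fin 2) R where
  toFun a := ∑ p ∈ antidiagonal n, (n.choose p.1 : MvPolynomial (Fin 2) R) *
    (C (a p.1) * X 0 ^ p.2 * X 1 ^ p.1)
  map_add' a b := by simp [← sum_add_distrib, mul_add, add_mul]
  map_smul' c a := by simp [mul_sum, smul_eq_C_mul, mul_assoc, mul_left_comm (C c)]

lemma binaryForm_apply (n : ℕ) (a : ℕ → R) :
    binaryForm n a = ∑ p ∈ antidiagonal n, (n.choose p.1 : MvPolynomial (Fin 2) R) *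
      (C (a p.1) * X 0 ^ p.2 * X 1 ^ p.1) := rfl

lemma binaryForm_congr {n : ℕ} {a b : ℕ → R} (h : ∀ i ≤ n, a i = b i) :
    binaryForm n a = binaryForm n b := by
  rw [binaryForm_apply, binaryForm_apply]
  exact sum_congr rfl fun p hp => by rw [h p.1 (HasAntidiagonal.antidiagonal.fst_le hp)]

@[simp]
lemma binaryForm_zero (a : ℕ → R) : binaryForm 0 a = C (a 0) := by
  simp [binaryForm_apply]

lemma binaryForm_succ (n : ℕ) (a : ℕ → R) :
    binaryForm (n + 1) a =
      X 0 * binaryForm n a + X 1 * binaryForm n (fun i => a (i + 1)) := by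
  have pascal := sum_antidiagonal_choose_succ_mul
    (fun i j => (C (a i) * X 0 ^ j * X 1 ^ i : MvPolynomial (Fin 2) R)) n
  rw [binaryForm_apply, pascal, binaryForm_apply, binaryForm_apply, mul_sum, mul_sum]
  refine congrArg₂ (· + ·) (sum_congr rfl fun p _ => by ring) (sum_congr rfl fun p hp => ?_)
  rw [Nat.choose_symm_of_eq_add (mem_antidiagonal.1 hp).symm]
  ring

lemma pderiv_zero_binaryForm_succ (n : ℕ) (a : ℕ → R) :
    pderiv 0 (binaryForm (n + 1) a) = C (n + 1 : R) * binaryForm n a := by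
  induction n generalizing a with
  | zero => simp [binaryForm_succ]
  | succ n ih =>
    rw [binaryForm_succ, map_add, pderiv_mul, pderiv_mul, ih, ih, binaryForm_succ n a,
      pderiv_X_self, pderiv_X_of_ne zero_ne_one.symm]
    simp only [C_add, map_natCast, C_1, Nat.cast_add, Nat.cast_one]
    ring

lemma pderiv_one_binaryForm_succ (n : ℕ) (a : ℕ → R) :
    pderiv 1 (binaryForm (n + 1) a) = C (n + 1 : R) * binaryForm n (fun i => a (i + 1)) := by
  induction n generalizing a with
  | zero => simp [binaryForm_succ]
  | succ n ih =>
    rw [binaryForm_succ, map_add, pderiv_mul, pderiv_mul, ih, ih,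
      binaryForm_succ n fun i => a (i + 1), pderiv_X_self, pderiv_X_of_ne zero_ne_one]
    simp only [C_add, map_natCast, C_1, Nat.cast_add, Nat.cast_one]
    ring

lemma dX_binaryForm (n p : ℕ) (a : ℕ → R) :
    dX p (binaryForm (n + p) a) = C ((n + p).descFactorial p : R) * binaryForm n a := by
  induction p with
  | zero => simp [dX]
  | succ p ih =>
    rw [dX, Function.iterate_succ_apply, ← dX, ← add_assoc, pderiv_zero_binaryForm_succ, dX_eq_pow,
      ← smul_eq_C_mul, map_smul, ← dX_eq_pow, ih, Nat.succ_descFactorial_succ, smul_eq_C_mul]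
    simp [mul_assoc]

lemma dZ_binaryForm (n p : ℕ) (a : ℕ → R) :
    dZ p (binaryForm (n + p) a) =
      C ((n + p).descFactorial p : R) * binaryForm n fun i => a (i + p) := by
  induction p generalizing a with
  | zero => simp [dZ]
  | succ p ih =>
    rw [dZ, Function.iterate_succ_apply, ← dZ, ← add_assoc, pderiv_one_binaryForm_succ, dZ_eq_pow,
      ← smul_eq_C_mul, map_smul, ← dZ_eq_pow, ih, Nat.succ_descFactorial_succ, smul_eq_C_mul]
    simp [mul_assoc, add_assoc]

lemma dX_dZ_binaryForm (n p q : ℕ) (a : ℕ → R) :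
    dX p (dZ q (binaryForm (n + p + q) a)) =
      C ((n + p + q).descFactorial (p + q) : R) * binaryForm n fun i => a (i + q) := by
  rw [dZ_binaryForm, dX_eq_pow, ← smul_eq_C_mul, map_smul, ← dX_eq_pow, dX_binaryForm,
    smul_eq_C_mul, ← mul_assoc, ← C_mul, ← Nat.cast_mul, mul_comm,
    ← Nat.descFactorial_mul_descFactorial (Nat.le_add_left q p)]
  simp [mul_comm]

/-- The combination `c + d S` of the identity and the shift `S` of sequences. In the symbolic
notation `(X + S Z) ^ n` for `binaryForm n a`, a linear substitution replaces the symbols `1` and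
`S` by two such combinations. -/
def shiftCombination (c d : R) : Module.End R (ℕ → R) :=
  c • 1 + d • LinearMap.funLeft R R Nat.succ

lemma shiftCombination_apply (c d : R) (a : ℕ → R) :
    shiftCombination c d a = c • a + d • fun i => a (i + 1) := rfl

lemma commute_shiftCombination (c d c' d' : R) :
    Commute (shiftCombination c d) (shiftCombination c' d') := by
  ext a i
  simp only [Module.End.mul_apply, shiftCombination_apply, smul_add, Pi.add_apply, Pi.smul_apply,
    smul_eq_mul]
  ring

/-- The coefficients of `linearSubst M f` in terms of those of the form `f` of degree `n`. -/
def substCoeff (M : Matrix (Fin 2) (Fin 2) R) (n : ℕ) (a : ℕ → R) (i : ℕ) : R :=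
  (shiftCombination (M 0 0) (M 1 0) ^ (n - i) * shiftCombination (M 0 1) (M 1 1) ^ i) a 0

lemma linearSubst_binaryForm (M : Matrix (Fin 2) (Fin 2) R) (n : ℕ) (a : ℕ → R) :
    linearSubst M (binaryForm n a) = binaryForm n (substCoeff M n a) := by
  induction n generalizing a with
  | zero => simp [substCoeff]
  | succ n ih =>
    have hX : binaryForm n (substCoeff M (n + 1) a) = M 0 0 • binaryForm n (substCoeff M n a) +
        M 1 0 • binaryForm n (substCoeff M n fun i => a (i + 1)) := by
      rw [← map_smul, ← map_smul, ← map_add]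
      refine binaryForm_congr fun i hi => ?_
      rw [substCoeff, Nat.succ_sub hi, pow_succ, mul_assoc,
        ((commute_shiftCombination _ _ _ _).pow_right i).eq, ← mul_assoc, Module.End.mul_apply,
        shiftCombination_apply, map_add, map_smul, map_smul]
      rfl
    have hZ : (fun i => substCoeff M (n + 1) a (i + 1)) = M 0 1 • substCoeff M n a +
        M 1 1 • substCoeff M n fun i => a (i + 1) := by
      funext i
      rw [substCoeff, Nat.succ_sub_succ, pow_succ, ← mul_assoc, Module.End.mul_apply,
        shiftCombination_apply, map_add, map_smul, map_smul]
      rfl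
    rw [binaryForm_succ, binaryForm_succ, map_add, map_mul, map_mul, ih, ih, linearSubst_X,
      linearSubst_X, hX, hZ]
    simp only [map_add, map_smul, smul_eq_C_mul]
    ring

lemma eq_of_binaryForm_eq [IsDomain R] {n : ℕ} (hn : (n.factorial : R) ≠ 0) {a b : ℕ → R}
    (h : binaryForm n a = binaryForm n b) {i : ℕ} (hi : i ≤ n) : a i = b i := by
  induction n generalizing a b i with
  | zero => simpa [Nat.le_zero.1 hi] using h
  | succ n ih =>
    rw [Nat.factorial_succ, Nat.cast_mul, mul_ne_zero_iff] at hn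
    have hC : C (n + 1 : R) ≠ (0 : MvPolynomial (Fin 2) R) := by
      simpa using (C_injective (Fin 2) R).ne hn.1
    cases i with
    | zero =>
      have hX := congrArg (pderiv 0) h
      rw [pderiv_zero_binaryForm_succ, pderiv_zero_binaryForm_succ] at hX
      exact ih hn.2 (mul_left_cancel₀ hC hX) n.zero_le
    | succ i =>
      have hZ := congrArg (pderiv 1) h
      rw [pderiv_one_binaryForm_succ, pderiv_one_binaryForm_succ] at hZ
      exact ih hn.2 (mul_left_cancel₀ hC hZ) (Nat.le_of_succ_le_succ hi)

lemma binaryForm_two (a : ℕ → R) : binaryForm 2 a =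
    C (a 0) * X 0 ^ 2 + C (2 * a 1) * X 0 * X 1 + C (a 2) * X 1 ^ 2 := by
  rw [binaryForm_apply, Finset.Nat.sum_antidiagonal_eq_sum_range_succ_mk]
  simp only [sum_range_succ, sum_range_zero, Nat.choose, Nat.reduceSub, C_mul, map_ofNat]
  push_cast
  ring

lemma binaryForm_four (a : ℕ → R) : binaryForm 4 a =
    C (a 0) * X 0 ^ 4 + C (4 * a 1) * X 0 ^ 3 * X 1 + C (6 * a 2) * X 0 ^ 2 * X 1 ^ 2 +
      C (4 * a 3) * X 0 * X 1 ^ 3 + C (a 4) * X 1 ^ 4 := by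
  rw [binaryForm_apply, Finset.Nat.sum_antidiagonal_eq_sum_range_succ_mk]
  simp only [sum_range_succ, sum_range_zero, Nat.choose, Nat.reduceSub, C_mul, map_ofNat]
  push_cast
  ring

lemma binaryForm_eight (a : ℕ → R) : binaryForm 8 a =
    C (a 0) * X 0 ^ 8 + C (8 * a 1) * X 0 ^ 7 * X 1 + C (28 * a 2) * X 0 ^ 6 * X 1 ^ 2 +
      C (56 * a 3) * X 0 ^ 5 * X 1 ^ 3 + C (70 * a 4) * X 0 ^ 4 * X 1 ^ 4 +
      C (56 * a 5) * X 0 ^ 3 * X 1 ^ 5 + C (28 * a 6) * X 0 ^ 2 * X 1 ^ 6 +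
      C (8 * a 7) * X 0 * X 1 ^ 7 + C (a 8) * X 1 ^ 8 := by
  rw [binaryForm_apply, Finset.Nat.sum_antidiagonal_eq_sum_range_succ_mk]
  simp only [sum_range_succ, sum_range_zero, Nat.choose, Nat.reduceSub, C_mul, map_ofNat]
  push_cast
  ring

lemma eval_binaryForm (n : ℕ) (a : ℕ → R) (v : Fin 2 → R) :
    eval v (binaryForm n a) =
      ∑ p ∈ antidiagonal n, n.choose p.1 * (a p.1 * v 0 ^ p.2 * v 1 ^ p.1) := by
  simp [binaryForm_apply]

lemma eval_zero_one_binaryForm (n : ℕ) (a : ℕ → R) : eval ![0, 1] (binaryForm n a) = a n := by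
  rw [eval_binaryForm, sum_eq_single (n, 0)]
  · simp
  · rintro ⟨i, j⟩ hij hne
    have hj : j ≠ 0 := by
      rintro rfl
      exact hne (by simpa using hij)
    simp [hj]
  · simp

lemma funLeft_succ_pow_apply (m : ℕ) (a : ℕ → R) (i : ℕ) :
    (LinearMap.funLeft R R Nat.succ ^ m) a i = a (i + m) := by
  induction m generalizing a with
  | zero => rfl
  | succ m ih => rw [pow_succ, Module.End.mul_apply, ih, LinearMap.funLeft_apply]; rfl

lemma substCoeff_swap (n : ℕ) (a : ℕ → R) (i : ℕ) :
    substCoeff !![0, 1; -1, 0] n a i = (-1) ^ (n - i) * a (n - i) := by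
  simp [substCoeff, shiftCombination, smul_pow, funLeft_succ_pow_apply]

lemma substCoeff_shear (t : R) (n : ℕ) (a : ℕ → R) (i : ℕ) :
    substCoeff !![1, 0; t, 1] n a i =
      ∑ j ∈ range (n - i + 1), (n - i).choose j * t ^ j * a (i + j) := by
  have hpow : (1 + t • LinearMap.funLeft R R Nat.succ) ^ (n - i) =
      ∑ j ∈ range (n - i + 1),
        ((n - i).choose j * t ^ j) • LinearMap.funLeft R R Nat.succ ^ j := by
    rw [add_comm, (Commute.one_right _).add_pow]
    refine sum_congr rfl fun j _ => ?_
    rw [one_pow, mul_one, smul_pow, ← nsmul_eq_mul', mul_smul, Nat.cast_smul_eq_nsmul]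
  simp [substCoeff, shiftCombination, hpow, funLeft_succ_pow_apply, add_comm i]

lemma exists_eq_binaryForm {K : Type*} [Field K] {n : ℕ} (hn : (n.factorial : K) ≠ 0)
    {f : MvPolynomial (Fin 2) K} (hf : f.IsHomogeneous n) : ∃ a, f = binaryForm n a := by
  refine ⟨fun i => (MvPolynomial.aeval ![Polynomial.X, 1] f).coeff (n - i) / n.choose i, ?_⟩
  refine (Polynomial.homogenize_eq_of_isHomogeneous hf rfl).symm.trans ?_
  rw [Polynomial.homogenize, binaryForm_apply, ← Finset.Nat.sum_antidiagonal_swap]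
  refine sum_congr rfl fun p hp => ?_
  have hsum := mem_antidiagonal.1 hp
  have hchoose : (n.choose p.1 : K) ≠ 0 := by
    rw [← Nat.choose_mul_factorial_mul_factorial (show p.1 ≤ n by lia)] at hn
    push_cast at hn
    exact left_ne_zero_of_mul (left_ne_zero_of_mul hn)
  rw [← map_natCast C, ← mul_assoc, ← mul_assoc, ← C_mul, mul_div_cancel₀ _ hchoose]
  simp [monomial_eq, Finsupp.prod_fintype, show n - p.1 = p.2 by lia, mul_assoc]

end BinaryForm

section Contraction

/-- The coefficients of the `h`-th transvectant of a form with coefficients `a` and a form of degree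
`h` with coefficients `b`. -/
def contraction {R : Type*} [CommRing R] (h : ℕ) (a b : ℕ → R) (i : ℕ) : R :=
  ∑ j ∈ Finset.range (h + 1), (-1) ^ j * h.choose j * (a (i + j) * b (h - j))

lemma contraction_quartic_self {R : Type*} [CommRing R] (k : ℕ → R) :
    contraction 4 k k 0 = 2 * (k 0 * k 4 - 4 * k 1 * k 3 + 3 * k 2 ^ 2) := by
  simp only [contraction, Finset.sum_range_succ, Finset.sum_range_zero, Nat.choose, Nat.reduceAdd,
    Nat.reduceSub]
  push_cast
  ring

variable {K : Type*} [Field K]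

lemma transvectant_binaryForm (m n h : ℕ) (a b : ℕ → K) (hm : ((m + h).factorial : K) ≠ 0)
    (hn : ((n + h).factorial : K) ≠ 0) :
    transvectant (m + h) (n + h) h (binaryForm (m + h) a) (binaryForm (n + h) b) =
      ∑ j ∈ Finset.range (h + 1), C ((-1 : K) ^ j * (h.choose j : K)) *
        (binaryForm m (fun i => a (i + j)) * binaryForm n (fun i => b (i + (h - j)))) := by
  have hterm {j : ℕ} (hj : j ∈ Finset.range (h + 1)) :
      dX (h - j) (dZ j (binaryForm (m + h) a)) * dX j (dZ (h - j) (binaryForm (n + h) b)) =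
        C ((m + h).descFactorial h * (n + h).descFactorial h : K) *
          (binaryForm m (fun i => a (i + j)) * binaryForm n (fun i => b (i + (h - j)))) := by
    obtain ⟨l, rfl⟩ := Nat.exists_eq_add_of_le' (Finset.mem_range_succ_iff.1 hj)
    rw [Nat.add_sub_cancel, ← add_assoc, dX_dZ_binaryForm, ← add_assoc, add_right_comm n,
      dX_dZ_binaryForm, add_comm j l, C_mul]
    ring
  have hm' := Nat.factorial_mul_descFactorial (Nat.le_add_left h m)
  have hn' := Nat.factorial_mul_descFactorial (Nat.le_add_left h n)
  have hone : (((m + h - h).factorial * (n + h - h).factorial : ℕ) : K) /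
        (((m + h).factorial * (n + h).factorial : ℕ) : K) *
      ((m + h).descFactorial h * (n + h).descFactorial h) = 1 := by
    rw [div_mul_eq_mul_div, div_eq_one_iff_eq (by simpa using ⟨hm, hn⟩), ← hm', ← hn']
    push_cast
    ring
  rw [transvectant, Finset.mul_sum]
  refine Finset.sum_congr rfl fun j hj => ?_
  rw [hterm hj]
  replace hone := congrArg (C (σ := Fin 2)) hone
  rw [C_mul, C_1] at hone
  linear_combination C ((-1 : K) ^ j * (h.choose j : K)) *
        (binaryForm m (fun i => a (i + j)) * binaryForm n (fun i => b (i + (h - j)))) * hone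

lemma transvectant_binaryForm_eq_contraction (m h : ℕ) (a b : ℕ → K)
    (hm : ((m + h).factorial : K) ≠ 0) (hh : (h.factorial : K) ≠ 0) :
    transvectant (m + h) h h (binaryForm (m + h) a) (binaryForm h b) =
      binaryForm m (contraction h a b) := by
  have key := transvectant_binaryForm m 0 h a b hm (by rwa [zero_add])
  have hsum : contraction h a b = ∑ j ∈ Finset.range (h + 1),
      ((-1) ^ j * h.choose j * b (h - j)) • fun i => a (i + j) := by
    ext i
    rw [contraction, Finset.sum_apply]
    exact Finset.sum_congr rfl fun j _ => by simp only [Pi.smul_apply, smul_eq_mul]; ring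
  rw [zero_add] at key
  rw [key, hsum, map_sum]
  refine Finset.sum_congr rfl fun j _ => ?_
  rw [binaryForm_zero, zero_add, map_smul, smul_eq_C_mul, C_mul (a' := b _)]
  ring

end Contraction

section OcticCovariants

variable {K : Type*} [Field K]

/-- The coefficients of the covariant `𝔤` of the octic with coefficients `a`. -/
def covGCoeff (a : ℕ → K) : ℕ → K
  | 0 => 2 * a 0 * a 4 - 8 * a 1 * a 3 + 6 * a 2 ^ 2
  | 1 => a 0 * a 5 - 3 * a 1 * a 4 + 2 * a 2 * a 3
  | 2 => (3 * a 0 * a 6 - 4 * a 1 * a 5 - 11 * a 2 * a 4 + 12 * a 3 ^ 2) / 7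
  | 3 => (a 0 * a 7 + 2 * a 1 * a 6 - 12 * a 2 * a 5 + 9 * a 3 * a 4) / 7
  | 4 => (a 0 * a 8 + 12 * a 1 * a 7 - 22 * a 2 * a 6 - 36 * a 3 * a 5 + 45 * a 4 ^ 2) / 35
  | 5 => (a 1 * a 8 + 2 * a 2 * a 7 - 12 * a 3 * a 6 + 9 * a 4 * a 5) / 7
  | 6 => (3 * a 2 * a 8 - 4 * a 3 * a 7 - 11 * a 4 * a 6 + 12 * a 5 ^ 2) / 7
  | 7 => a 3 * a 8 - 3 * a 4 * a 7 + 2 * a 5 * a 6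
  | 8 => 2 * a 4 * a 8 - 8 * a 5 * a 7 + 6 * a 6 ^ 2
  | _ => 0

/-- The coefficients of the covariant `𝔨` of the octic with coefficients `a`. -/
def covKCoeff (a : ℕ → K) : ℕ → K
  | 0 => 2 * a 0 * a 6 - 12 * a 1 * a 5 + 30 * a 2 * a 4 - 20 * a 3 ^ 2
  | 1 => a 0 * a 7 - 5 * a 1 * a 6 + 9 * a 2 * a 5 - 5 * a 3 * a 4
  | 2 => (a 0 * a 8 - 2 * a 1 * a 7 - 8 * a 2 * a 6 + 34 * a 3 * a 5 - 25 * a 4 ^ 2) / 3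
  | 3 => a 1 * a 8 - 5 * a 2 * a 7 + 9 * a 3 * a 6 - 5 * a 4 * a 5
  | 4 => 2 * a 2 * a 8 - 12 * a 3 * a 7 + 30 * a 4 * a 6 - 20 * a 5 ^ 2
  | _ => 0

/-- The coefficients of the Hessian covariant `(κ, κ)₂` of the quartic `κ` with coefficients
`k`. -/
def quarticHessianCoeff (k : ℕ → K) : ℕ → K
  | 0 => 2 * (k 0 * k 2 - k 1 ^ 2)
  | 1 => k 0 * k 3 - k 1 * k 2
  | 2 => (k 0 * k 4 + 2 * k 1 * k 3 - 3 * k 2 ^ 2) / 3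
  | 3 => k 1 * k 4 - k 2 * k 3
  | 4 => 2 * (k 2 * k 4 - k 3 ^ 2)
  | _ => 0

lemma covK_binaryForm (h8 : (Nat.factorial 8 : K) ≠ 0) (a : ℕ → K) :
    covK (binaryForm 8 a) = binaryForm 4 (covKCoeff a) := by
  have three_ne : (3 : K) ≠ 0 := ofNat_ne_zero_of_factorial_ne_zero h8 (by simp)
  have hk : 6 * covKCoeff a 2 =
      2 * (a 0 * a 8 - 2 * a 1 * a 7 - 8 * a 2 * a 6 + 34 * a 3 * a 5 - 25 * a 4 ^ 2) := by
    rw [covKCoeff]; field_simp; ring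
  rw [covK, transvectant_binaryForm 2 2 6 a a h8 h8, binaryForm_four, hk]
  simp only [Finset.sum_range_succ, Finset.range_one, Finset.sum_singleton, binaryForm_two,
    covKCoeff, Nat.choose, Nat.reduceAdd, Nat.reduceSub, C_mul, C_add, C_sub, C_pow, C_neg, C_1,
    map_natCast, map_ofNat]
  push_cast
  ring

lemma covG_binaryForm (h8 : (Nat.factorial 8 : K) ≠ 0) (a : ℕ → K) :
    covG (binaryForm 8 a) = binaryForm 8 (covGCoeff a) := by
  have five_ne : (5 : K) ≠ 0 := ofNat_ne_zero_of_factorial_ne_zero h8 (by simp)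
  have seven_ne : (7 : K) ≠ 0 := ofNat_ne_zero_of_factorial_ne_zero h8 (by simp)
  have hg2 : 28 * covGCoeff a 2 =
      4 * (3 * a 0 * a 6 - 4 * a 1 * a 5 - 11 * a 2 * a 4 + 12 * a 3 ^ 2) := by
    rw [covGCoeff]; field_simp; ring
  have hg3 : 56 * covGCoeff a 3 =
      8 * (a 0 * a 7 + 2 * a 1 * a 6 - 12 * a 2 * a 5 + 9 * a 3 * a 4) := by
    rw [covGCoeff]; field_simp; ring
  have hg4 : 70 * covGCoeff a 4 = 2 * (a 0 * a 8 + 12 * a 1 * a 7 - 22 * a 2 * a 6 -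
      36 * a 3 * a 5 + 45 * a 4 ^ 2) := by
    rw [covGCoeff, show (35 : K) = 5 * 7 by norm_num]; field_simp; ring
  have hg5 : 56 * covGCoeff a 5 =
      8 * (a 1 * a 8 + 2 * a 2 * a 7 - 12 * a 3 * a 6 + 9 * a 4 * a 5) := by
    rw [covGCoeff]; field_simp; ring
  have hg6 : 28 * covGCoeff a 6 =
      4 * (3 * a 2 * a 8 - 4 * a 3 * a 7 - 11 * a 4 * a 6 + 12 * a 5 ^ 2) := by
    rw [covGCoeff]; field_simp; ring
  rw [covG, transvectant_binaryForm 4 4 4 a a h8 h8, binaryForm_eight, hg2, hg3, hg4, hg5, hg6]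
  simp only [Finset.sum_range_succ, Finset.range_one, Finset.sum_singleton, binaryForm_four,
    covGCoeff, Nat.choose, Nat.reduceAdd, Nat.reduceSub, C_mul, C_add, C_sub, C_pow, C_neg, C_1,
    map_natCast, map_ofNat]
  push_cast
  ring

lemma transvectant_quartic_self (h4 : (Nat.factorial 4 : K) ≠ 0) (k : ℕ → K) :
    transvectant 4 4 2 (binaryForm 4 k) (binaryForm 4 k) =
      binaryForm 4 (quarticHessianCoeff k) := by
  have three_ne : (3 : K) ≠ 0 := ofNat_ne_zero_of_factorial_ne_zero h4 (by simp)
  have hh2 : 6 * quarticHessianCoeff k 2 = 2 * (k 0 * k 4 + 2 * k 1 * k 3 - 3 * k 2 ^ 2) := by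
    rw [quarticHessianCoeff]; field_simp; ring
  rw [transvectant_binaryForm 2 2 2 k k h4 h4, binaryForm_four, hh2]
  simp only [Finset.sum_range_succ, Finset.range_one, Finset.sum_singleton, binaryForm_two,
    quarticHessianCoeff, Nat.choose, Nat.reduceAdd, Nat.reduceSub, C_mul, C_add, C_sub, C_pow,
    C_neg, C_1, map_natCast, map_ofNat]
  push_cast
  ring

lemma constantCoeff_transvectant_binaryForm {n : ℕ} (hn : (n.factorial : K) ≠ 0) (a b : ℕ → K) :
    constantCoeff (transvectant n n n (binaryForm n a) (binaryForm n b)) =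
      contraction n a b 0 := by
  have key := transvectant_binaryForm_eq_contraction 0 n a b (by rwa [zero_add]) hn
  rw [zero_add] at key
  rw [key, binaryForm_zero, constantCoeff_C]

lemma covH_binaryForm (h8 : (Nat.factorial 8 : K) ≠ 0) (a : ℕ → K) :
    covH (binaryForm 8 a) = binaryForm 4 (quarticHessianCoeff (covKCoeff a)) := by
  rw [covH, covK_binaryForm h8, transvectant_quartic_self (factorial_ne_zero_of_le (by simp) h8)]

lemma covM_binaryForm (h8 : (Nat.factorial 8 : K) ≠ 0) (a : ℕ → K) :
    covM (binaryForm 8 a) = binaryForm 4 (contraction 4 a (covKCoeff a)) := by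
  rw [covM, covK_binaryForm h8]
  exact transvectant_binaryForm_eq_contraction 4 4 _ _ h8 (factorial_ne_zero_of_le (by simp) h8)

lemma covN_binaryForm (h8 : (Nat.factorial 8 : K) ≠ 0) (a : ℕ → K) :
    covN (binaryForm 8 a) =
      binaryForm 4 (contraction 4 a (quarticHessianCoeff (covKCoeff a))) := by
  rw [covN, covH_binaryForm h8]
  exact transvectant_binaryForm_eq_contraction 4 4 _ _ h8 (factorial_ne_zero_of_le (by simp) h8)

lemma shJ2_binaryForm (h8 : (Nat.factorial 8 : K) ≠ 0) (a : ℕ → K) :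
    shJ2 (binaryForm 8 a) = contraction 8 a a 0 :=
  constantCoeff_transvectant_binaryForm h8 a a

lemma shJ3_binaryForm (h8 : (Nat.factorial 8 : K) ≠ 0) (a : ℕ → K) :
    shJ3 (binaryForm 8 a) = contraction 8 a (covGCoeff a) 0 := by
  rw [shJ3, covG_binaryForm h8, constantCoeff_transvectant_binaryForm h8]

lemma shJ4_binaryForm (h8 : (Nat.factorial 8 : K) ≠ 0) (a : ℕ → K) :
    shJ4 (binaryForm 8 a) = contraction 4 (covKCoeff a) (covKCoeff a) 0 := by
  rw [shJ4, covK_binaryForm h8,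
    constantCoeff_transvectant_binaryForm (factorial_ne_zero_of_le (by simp) h8)]

lemma shJ5_binaryForm (h8 : (Nat.factorial 8 : K) ≠ 0) (a : ℕ → K) :
    shJ5 (binaryForm 8 a) = contraction 4 (contraction 4 a (covKCoeff a)) (covKCoeff a) 0 := by
  rw [shJ5, covM_binaryForm h8, covK_binaryForm h8,
    constantCoeff_transvectant_binaryForm (factorial_ne_zero_of_le (by simp) h8)]

lemma shJ6_binaryForm (h8 : (Nat.factorial 8 : K) ≠ 0) (a : ℕ → K) :
    shJ6 (binaryForm 8 a) =
      contraction 4 (covKCoeff a) (quarticHessianCoeff (covKCoeff a)) 0 := by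
  rw [shJ6, covH_binaryForm h8, covK_binaryForm h8,
    constantCoeff_transvectant_binaryForm (factorial_ne_zero_of_le (by simp) h8)]

lemma shJ7_binaryForm (h8 : (Nat.factorial 8 : K) ≠ 0) (a : ℕ → K) :
    shJ7 (binaryForm 8 a) =
      contraction 4 (contraction 4 a (covKCoeff a)) (quarticHessianCoeff (covKCoeff a)) 0 := by
  rw [shJ7, covM_binaryForm h8, covH_binaryForm h8,
    constantCoeff_transvectant_binaryForm (factorial_ne_zero_of_le (by simp) h8)]

lemma shJ9_binaryForm (h8 : (Nat.factorial 8 : K) ≠ 0) (a : ℕ → K) :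
    shJ9 (binaryForm 8 a) =
      contraction 4 (contraction 4 a (quarticHessianCoeff (covKCoeff a)))
        (quarticHessianCoeff (covKCoeff a)) 0 := by
  rw [shJ9, covN_binaryForm h8, covH_binaryForm h8,
    constantCoeff_transvectant_binaryForm (factorial_ne_zero_of_le (by simp) h8)]

end OcticCovariants

section Covariance

variable {K : Type*} [Field K] (M : Matrix (Fin 2) (Fin 2) K) (f : MvPolynomial (Fin 2) K)

lemma covG_linearSubst :
    covG (linearSubst M f) = C (M.det ^ 4) * linearSubst M (covG f) :=
  transvectant_linearSubst M 8 8 4 f f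

lemma covK_linearSubst :
    covK (linearSubst M f) = C (M.det ^ 6) * linearSubst M (covK f) :=
  transvectant_linearSubst M 8 8 6 f f

lemma covH_linearSubst :
    covH (linearSubst M f) = C (M.det ^ 14) * linearSubst M (covH f) := by
  rw [covH, covK_linearSubst, transvectant_C_mul_left, transvectant_C_mul_right,
    transvectant_linearSubst, covH]
  simp only [← mul_assoc, ← C_mul, ← pow_add]

lemma covM_linearSubst :
    covM (linearSubst M f) = C (M.det ^ 10) * linearSubst M (covM f) := by
  rw [covM, covK_linearSubst, transvectant_C_mul_right, transvectant_linearSubst, covM]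
  simp only [← mul_assoc, ← C_mul, ← pow_add]

lemma covN_linearSubst :
    covN (linearSubst M f) = C (M.det ^ 18) * linearSubst M (covN f) := by
  rw [covN, covH_linearSubst, transvectant_C_mul_right, transvectant_linearSubst, covN]
  simp only [← mul_assoc, ← C_mul, ← pow_add]

lemma constantCoeff_transvectant_linearSubst (r₁ r₂ h m n : ℕ) (p q : MvPolynomial (Fin 2) K) :
    constantCoeff (transvectant r₁ r₂ h (C (M.det ^ m) * linearSubst M p)
      (C (M.det ^ n) * linearSubst M q)) =
        M.det ^ (m + n + h) * constantCoeff (transvectant r₁ r₂ h p q) := by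
  rw [transvectant_C_mul_left, transvectant_C_mul_right, transvectant_linearSubst]
  simp only [map_mul, constantCoeff_C, constantCoeff_linearSubst]
  ring

lemma shJ2_linearSubst : shJ2 (linearSubst M f) = M.det ^ 8 * shJ2 f := by
  simpa [shJ2] using constantCoeff_transvectant_linearSubst M 8 8 8 0 0 f f

lemma shJ3_linearSubst : shJ3 (linearSubst M f) = M.det ^ 12 * shJ3 f := by
  simpa [shJ3, covG_linearSubst] using
    constantCoeff_transvectant_linearSubst M 8 8 8 0 4 f (covG f)

lemma shJ4_linearSubst : shJ4 (linearSubst M f) = M.det ^ 16 * shJ4 f := by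
  rw [shJ4, covK_linearSubst, constantCoeff_transvectant_linearSubst, shJ4]

lemma shJ5_linearSubst : shJ5 (linearSubst M f) = M.det ^ 20 * shJ5 f := by
  rw [shJ5, covM_linearSubst, covK_linearSubst, constantCoeff_transvectant_linearSubst, shJ5]

lemma shJ6_linearSubst : shJ6 (linearSubst M f) = M.det ^ 24 * shJ6 f := by
  rw [shJ6, covK_linearSubst, covH_linearSubst, constantCoeff_transvectant_linearSubst, shJ6]

lemma shJ7_linearSubst : shJ7 (linearSubst M f) = M.det ^ 28 * shJ7 f := by
  rw [shJ7, covM_linearSubst, covH_linearSubst, constantCoeff_transvectant_linearSubst, shJ7]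

lemma shJ9_linearSubst : shJ9 (linearSubst M f) = M.det ^ 36 * shJ9 f := by
  rw [shJ9, covN_linearSubst, covH_linearSubst, constantCoeff_transvectant_linearSubst, shJ9]

/-- The relations among the Shioda invariants that force a squarefree octic to be
`GL₂`-equivalent to the octahedral one. -/
structure OctahedralRelations : Prop where
  rel : 30 * shJ3 f ^ 2 = shJ2 f ^ 3
  shJ4_eq_zero : shJ4 f = 0
  shJ5_eq_zero : shJ5 f = 0
  shJ6_eq_zero : shJ6 f = 0
  shJ7_eq_zero : shJ7 f = 0
  shJ9_eq_zero : shJ9 f = 0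

variable {f}

lemma rel_linearSubst (h : 30 * shJ3 f ^ 2 = shJ2 f ^ 3) :
    30 * shJ3 (linearSubst M f) ^ 2 = shJ2 (linearSubst M f) ^ 3 := by
  rw [shJ2_linearSubst, shJ3_linearSubst]
  linear_combination M.det ^ 24 * h

lemma OctahedralRelations.linearSubst (h : OctahedralRelations f) :
    OctahedralRelations (linearSubst M f) where
  rel := rel_linearSubst M h.rel
  shJ4_eq_zero := by rw [shJ4_linearSubst, h.shJ4_eq_zero, mul_zero]
  shJ5_eq_zero := by rw [shJ5_linearSubst, h.shJ5_eq_zero, mul_zero]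
  shJ6_eq_zero := by rw [shJ6_linearSubst, h.shJ6_eq_zero, mul_zero]
  shJ7_eq_zero := by rw [shJ7_linearSubst, h.shJ7_eq_zero, mul_zero]
  shJ9_eq_zero := by rw [shJ9_linearSubst, h.shJ9_eq_zero, mul_zero]

end Covariance

section Normalization

variable {K : Type*} [Field K]

lemma covKCoeff_substCoeff (h8 : (Nat.factorial 8 : K) ≠ 0) (M : Matrix (Fin 2) (Fin 2) K)
    (a : ℕ → K) {i : ℕ} (hi : i ≤ 4) :
    covKCoeff (substCoeff M 8 a) i = M.det ^ 6 * substCoeff M 4 (covKCoeff a) i := by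
  have key := covK_linearSubst M (binaryForm 8 a)
  rw [linearSubst_binaryForm, covK_binaryForm h8, covK_binaryForm h8, linearSubst_binaryForm,
    ← smul_eq_C_mul, ← map_smul] at key
  exact eq_of_binaryForm_eq (factorial_ne_zero_of_le (by simp) h8) key hi

lemma exists_eval_binaryForm_eq_zero [IsAlgClosed K] {n : ℕ} (hn : 0 < n) {a : ℕ → K}
    (ha : a n ≠ 0) : ∃ t : K, eval ![1, t] (binaryForm n a) = 0 := by
  let p : Polynomial K := ∑ i ∈ Finset.range (n + 1), Polynomial.monomial i (n.choose i * a i)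
  have hcoeff : p.coeff n ≠ 0 := by
    simpa [p, Polynomial.coeff_monomial] using ha
  have hdeg : p.degree ≠ 0 := fun h =>
    hcoeff (Polynomial.coeff_eq_zero_of_degree_lt (by rw [h]; exact_mod_cast hn))
  obtain ⟨t, ht⟩ := IsAlgClosed.exists_root p hdeg
  refine ⟨t, Eq.trans ?_ ht⟩
  rw [eval_binaryForm, Finset.Nat.sum_antidiagonal_eq_sum_range_succ
    fun i j => (n.choose i : K) * (a i * ![1, t] 0 ^ j * ![1, t] 1 ^ i)]
  simp [p, Polynomial.eval_finsetSum, mul_assoc]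

lemma exists_substCoeff_self_eq_zero [IsAlgClosed K] {n : ℕ} (hn : 0 < n) (a : ℕ → K) :
    ∃ M : Matrix (Fin 2) (Fin 2) K, IsUnit M.det ∧ substCoeff M n a n = 0 := by
  by_cases ha : a n = 0
  · refine ⟨1, by simp, ?_⟩
    rw [← eval_zero_one_binaryForm n (substCoeff _ n a), ← linearSubst_binaryForm, linearSubst_one,
      eval_zero_one_binaryForm, ha]
  · obtain ⟨t, ht⟩ := exists_eval_binaryForm_eq_zero hn ha
    have hv : !![0, 1; -1, t].mulVec ![0, 1] = ![1, t] := by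
      ext j
      fin_cases j <;> simp [Matrix.mulVec, dotProduct]
    refine ⟨!![0, 1; -1, t], by simp [Matrix.det_fin_two], ?_⟩
    rw [← eval_zero_one_binaryForm n (substCoeff _ n a), ← linearSubst_binaryForm,
      eval_linearSubst, hv, ht]

end Normalization

section GLEquivalence

variable {R : Type*} [CommRing R]

/-- `GL₂`-equivalence of binary forms: `f` arises from `g` by an invertible linear substitution. -/
def GLEquivalent (f g : MvPolynomial (Fin 2) R) : Prop :=
  ∃ M : Matrix (Fin 2) (Fin 2) R, IsUnit M.det ∧ f = linearSubst M g

variable {f g h : MvPolynomial (Fin 2) R}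

lemma GLEquivalent.refl (f : MvPolynomial (Fin 2) R) : GLEquivalent f f :=
  ⟨1, by simp, (linearSubst_one f).symm⟩

lemma GLEquivalent.symm (hfg : GLEquivalent f g) : GLEquivalent g f := by
  obtain ⟨M, hM, rfl⟩ := hfg
  exact ⟨M⁻¹, M.isUnit_nonsing_inv_det hM, (linearSubst_inv_linearSubst hM g).symm⟩

lemma GLEquivalent.trans (hfg : GLEquivalent f g) (hgh : GLEquivalent g h) :
    GLEquivalent f h := by
  obtain ⟨M, hM, rfl⟩ := hfg
  obtain ⟨N, hN, rfl⟩ := hgh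
  exact ⟨N * M, by rw [Matrix.det_mul]; exact hN.mul hM, linearSubst_linearSubst M N h⟩

lemma GLEquivalent.squarefree (hfg : GLEquivalent f g) (hf : Squarefree f) : Squarefree g := by
  obtain ⟨M, hM, rfl⟩ := hfg.symm
  exact squarefree_linearSubst hM hf

lemma glEquivalent_linearSubst {M : Matrix (Fin 2) (Fin 2) R} (hM : IsUnit M.det)
    (f : MvPolynomial (Fin 2) R) : GLEquivalent f (linearSubst M f) :=
  GLEquivalent.symm ⟨M, hM, rfl⟩

lemma glEquivalent_binaryForm_substCoeff {M : Matrix (Fin 2) (Fin 2) R} (hM : IsUnit M.det)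
    (n : ℕ) (a : ℕ → R) : GLEquivalent (binaryForm n a) (binaryForm n (substCoeff M n a)) :=
  linearSubst_binaryForm M n a ▸ glEquivalent_linearSubst hM _

end GLEquivalence

section Degeneration

lemma coeff_ne_zero_of_squarefree {R : Type*} [CommRing R] [Nontrivial R] {n : ℕ} {a : ℕ → R}
    (hsf : Squarefree (binaryForm (n + 1) a)) (ha : a (n + 1) = 0) : a n ≠ 0 := by
  intro ha'
  have hdvd : (X 0 * X 0 : MvPolynomial (Fin 2) R) ∣ binaryForm (n + 1) a := by
    rw [binaryForm_apply]
    refine Finset.dvd_sum fun p hp => ?_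
    have hsum := Finset.HasAntidiagonal.mem_antidiagonal.1 hp
    by_cases h2 : 2 ≤ p.2
    · refine Dvd.dvd.mul_left (Dvd.dvd.mul_right (Dvd.dvd.mul_left ?_ _) _) _
      exact pow_two (X 0 : MvPolynomial (Fin 2) R) ▸ pow_dvd_pow _ h2
    · obtain h | h : p.1 = n + 1 ∨ p.1 = n := by lia
      all_goals simp [h, ha, ha']
  have hunit := (hsf _ hdvd).map constantCoeff
  rw [constantCoeff_X] at hunit
  exact not_isUnit_zero hunit

variable {K : Type*} [Field K]

lemma GLEquivalent.octahedralRelations {f g : MvPolynomial (Fin 2) K} (hfg : GLEquivalent f g)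
    (hf : OctahedralRelations f) : OctahedralRelations g := by
  obtain ⟨M, -, rfl⟩ := hfg.symm
  exact hf.linearSubst M

lemma contraction_quarticHessianCoeff (three_ne : (3 : K) ≠ 0) (k : ℕ → K) :
    contraction 4 k (quarticHessianCoeff k) 0 =
      6 * (k 0 * k 2 * k 4 + 2 * k 1 * k 2 * k 3 - k 2 ^ 3 - k 0 * k 3 ^ 2 - k 1 ^ 2 * k 4) := by
  simp only [contraction, Finset.sum_range_succ, Finset.sum_range_zero, Nat.choose, Nat.reduceAdd,
    Nat.reduceSub, quarticHessianCoeff]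
  push_cast
  field_simp
  ring

lemma OctahedralRelations.covKCoeff_quadratic (h8 : (Nat.factorial 8 : K) ≠ 0) {a : ℕ → K}
    (ha : OctahedralRelations (binaryForm 8 a)) :
    covKCoeff a 0 * covKCoeff a 4 - 4 * covKCoeff a 1 * covKCoeff a 3 +
      3 * covKCoeff a 2 ^ 2 = 0 := by
  have two_ne : (2 : K) ≠ 0 := ofNat_ne_zero_of_factorial_ne_zero h8 (by simp)
  have hJ4 := ha.shJ4_eq_zero
  rw [shJ4_binaryForm h8, contraction_quartic_self] at hJ4
  exact (mul_eq_zero.1 hJ4).resolve_left two_ne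

lemma OctahedralRelations.covKCoeff_cubic (h8 : (Nat.factorial 8 : K) ≠ 0) {a : ℕ → K}
    (ha : OctahedralRelations (binaryForm 8 a)) :
    covKCoeff a 0 * covKCoeff a 2 * covKCoeff a 4 +
      2 * covKCoeff a 1 * covKCoeff a 2 * covKCoeff a 3 - covKCoeff a 2 ^ 3 -
      covKCoeff a 0 * covKCoeff a 3 ^ 2 - covKCoeff a 1 ^ 2 * covKCoeff a 4 = 0 := by
  have three_ne : (3 : K) ≠ 0 := ofNat_ne_zero_of_factorial_ne_zero h8 (by simp)
  have six_ne : (6 : K) ≠ 0 := ofNat_ne_zero_of_factorial_ne_zero h8 (by simp)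
  have hJ6 := ha.shJ6_eq_zero
  rw [shJ6_binaryForm h8, contraction_quarticHessianCoeff three_ne] at hJ6
  exact (mul_eq_zero.1 hJ6).resolve_left six_ne

lemma covKCoeff_substCoeff_shear (h8 : (Nat.factorial 8 : K) ≠ 0) (t : K) (a : ℕ → K) {i : ℕ}
    (hi : i ≤ 4) :
    covKCoeff (substCoeff !![1, 0; t, 1] 8 a) i =
      ∑ j ∈ Finset.range (4 - i + 1), (4 - i).choose j * t ^ j * covKCoeff a (i + j) := by
  simp [covKCoeff_substCoeff h8 _ a hi, substCoeff_shear]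

lemma covKCoeff_substCoeff_swap (h8 : (Nat.factorial 8 : K) ≠ 0) (a : ℕ → K) {i : ℕ}
    (hi : i ≤ 4) :
    covKCoeff (substCoeff !![0, 1; -1, 0] 8 a) i = (-1) ^ (4 - i) * covKCoeff a (4 - i) := by
  simp [covKCoeff_substCoeff h8 _ a hi, substCoeff_swap]

/-- A shear makes the quadratic coefficient of `𝔨` vanish; its two invariants then leave only the
coefficient of `XZ³`, so that infinity and zero may be exchanged. -/
lemma exists_covKCoeff_triple_root_of_simple_root (h8 : (Nat.factorial 8 : K) ≠ 0) {a : ℕ → K}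
    (ha : OctahedralRelations (binaryForm 8 a)) (h4 : covKCoeff a 4 = 0)
    (h3 : covKCoeff a 3 ≠ 0) :
    ∃ b, GLEquivalent (binaryForm 8 a) (binaryForm 8 b) ∧
      covKCoeff b 2 = 0 ∧ covKCoeff b 3 = 0 ∧ covKCoeff b 4 = 0 := by
  have two_ne : (2 : K) ≠ 0 := ofNat_ne_zero_of_factorial_ne_zero h8 (by simp)
  have four_ne : (4 : K) ≠ 0 := ofNat_ne_zero_of_factorial_ne_zero h8 (by simp)
  set t := -covKCoeff a 2 / (2 * covKCoeff a 3) with ht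
  have hab := glEquivalent_binaryForm_substCoeff (M := !![1, 0; t, 1]) (by simp) 8 a
  have hk := fun i hi => covKCoeff_substCoeff_shear h8 t a (i := i) hi
  generalize substCoeff !![1, 0; t, 1] 8 a = b at hab hk
  have hb := hab.octahedralRelations ha
  have hb4 : covKCoeff b 4 = 0 := by simpa [h4] using hk 4
  have hb3 : covKCoeff b 3 ≠ 0 := by
    rwa [show covKCoeff b 3 = covKCoeff a 3 by simpa [Finset.sum_range_succ, h4] using hk 3]
  have hb2 : covKCoeff b 2 = 0 := by
    rw [hk 2 (by simp)]
    simp only [Finset.sum_range_succ, Finset.sum_range_zero, ht, h4]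
    norm_num
    field_simp
    ring
  have hb1 : covKCoeff b 1 = 0 := by
    simpa [hb2, hb4, hb3, four_ne] using hb.covKCoeff_quadratic h8
  have hb0 : covKCoeff b 0 = 0 := by
    simpa [hb2, hb4, hb3] using hb.covKCoeff_cubic h8
  refine ⟨_, hab.trans (glEquivalent_binaryForm_substCoeff (M := !![0, 1; -1, 0]) (by simp) 8 b),
    ?_, ?_, ?_⟩
  all_goals simp [covKCoeff_substCoeff_swap h8, hb0, hb1, hb2]

lemma exists_covKCoeff_triple_root [IsAlgClosed K] (h8 : (Nat.factorial 8 : K) ≠ 0) {a : ℕ → K}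
    (ha : OctahedralRelations (binaryForm 8 a)) :
    ∃ b, GLEquivalent (binaryForm 8 a) (binaryForm 8 b) ∧
      covKCoeff b 2 = 0 ∧ covKCoeff b 3 = 0 ∧ covKCoeff b 4 = 0 := by
  have three_ne : (3 : K) ≠ 0 := ofNat_ne_zero_of_factorial_ne_zero h8 (by simp)
  obtain ⟨M, hM, hroot⟩ := exists_substCoeff_self_eq_zero four_pos (covKCoeff a)
  have hab := glEquivalent_binaryForm_substCoeff hM 8 a
  have hb4 : covKCoeff (substCoeff M 8 a) 4 = 0 := by
    rw [covKCoeff_substCoeff h8 M a le_rfl, hroot, mul_zero]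
  generalize substCoeff M 8 a = b at hab hb4
  have hb := hab.octahedralRelations ha
  by_cases hb3 : covKCoeff b 3 = 0
  · have hb2 : covKCoeff b 2 = 0 := by
      simpa [hb3, hb4, three_ne] using hb.covKCoeff_quadratic h8
    exact ⟨b, hab, hb2, hb3, hb4⟩
  · obtain ⟨c, hbc, hc⟩ := exists_covKCoeff_triple_root_of_simple_root h8 hb hb4 hb3
    exact ⟨c, hab.trans hbc, hc⟩

lemma covKCoeff_one_eq_zero (h8 : (Nat.factorial 8 : K) ≠ 0) {a : ℕ → K}
    (hsf : Squarefree (binaryForm 8 a)) (ha : OctahedralRelations (binaryForm 8 a))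
    (h2 : covKCoeff a 2 = 0) (h3 : covKCoeff a 3 = 0) (h4 : covKCoeff a 4 = 0) :
    covKCoeff a 1 = 0 := by
  by_contra h1
  have two_ne : (2 : K) ≠ 0 := ofNat_ne_zero_of_factorial_ne_zero h8 (by simp)
  have four_ne : (4 : K) ≠ 0 := ofNat_ne_zero_of_factorial_ne_zero h8 (by simp)
  have ha8 : a 8 = 0 := by
    have hJ9 := ha.shJ9_eq_zero
    rw [shJ9_binaryForm h8] at hJ9
    simpa [contraction, Finset.sum_range_succ, quarticHessianCoeff, h1, h2, h3, h4, two_ne]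
      using hJ9
  have ha7 : a 7 = 0 := by
    have hJ7 := ha.shJ7_eq_zero
    rw [shJ7_binaryForm h8] at hJ7
    simpa [contraction, Finset.sum_range_succ, quarticHessianCoeff, h1, h2, h3, h4, two_ne,
      four_ne, ha8] using hJ7
  exact coeff_ne_zero_of_squarefree hsf ha8 ha7

lemma covK_binaryForm_eq_zero_iff (h8 : (Nat.factorial 8 : K) ≠ 0) {a : ℕ → K} :
    covK (binaryForm 8 a) = 0 ↔ ∀ i ≤ 4, covKCoeff a i = 0 := by
  rw [covK_binaryForm h8, ← map_zero (binaryForm 4)]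
  exact ⟨fun h _ => eq_of_binaryForm_eq (factorial_ne_zero_of_le (by simp) h8) h,
    binaryForm_congr⟩

lemma exists_coeff_eight_eq_zero [IsAlgClosed K] (h8 : (Nat.factorial 8 : K) ≠ 0) {a : ℕ → K}
    (ha : OctahedralRelations (binaryForm 8 a)) (hk : ∀ i ∈ Finset.Icc 1 4, covKCoeff a i = 0) :
    ∃ b, GLEquivalent (binaryForm 8 a) (binaryForm 8 b) ∧ b 8 = 0 ∧
      ∀ i ∈ Finset.Icc 1 4, covKCoeff b i = 0 := by
  by_cases h0 : covKCoeff a 0 = 0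
  · obtain ⟨M, hM, hroot⟩ := exists_substCoeff_self_eq_zero (n := 8) (by simp) a
    have hK : covK (binaryForm 8 (substCoeff M 8 a)) = 0 := by
      rw [← linearSubst_binaryForm, covK_linearSubst, (covK_binaryForm_eq_zero_iff h8).2,
        map_zero, mul_zero]
      intro i hi
      obtain rfl | hi0 := i.eq_zero_or_pos
      · exact h0
      · exact hk i (Finset.mem_Icc.2 ⟨hi0, hi⟩)
    exact ⟨_, glEquivalent_binaryForm_substCoeff hM 8 a, hroot, fun i hi =>
      (covK_binaryForm_eq_zero_iff h8).1 hK i (Finset.mem_Icc.1 hi).2⟩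
  · refine ⟨a, .refl _, ?_, hk⟩
    have hJ5 := ha.shJ5_eq_zero
    rw [shJ5_binaryForm h8] at hJ5
    simpa [contraction, Finset.sum_range_succ, hk, h0] using hJ5

lemma exists_coeff_six_eq_zero (h8 : (Nat.factorial 8 : K) ≠ 0) {a : ℕ → K}
    (hsf : Squarefree (binaryForm 8 a)) (ha8 : a 8 = 0)
    (hk : ∀ i ∈ Finset.Icc 1 4, covKCoeff a i = 0) :
    ∃ b, GLEquivalent (binaryForm 8 a) (binaryForm 8 b) ∧ b 6 = 0 ∧ b 8 = 0 ∧
      ∀ i ∈ Finset.Icc 1 4, covKCoeff b i = 0 := by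
  have two_ne : (2 : K) ≠ 0 := ofNat_ne_zero_of_factorial_ne_zero h8 (by simp)
  have ha7 := coeff_ne_zero_of_squarefree hsf ha8
  refine ⟨_, glEquivalent_binaryForm_substCoeff (M := !![1, 0; -a 6 / (2 * a 7), 1]) (by simp) 8 a,
    ?_, ?_, fun i hi => ?_⟩
  · rw [substCoeff_shear]
    simp only [Finset.sum_range_succ, Finset.sum_range_zero, ha8]
    norm_num
    field_simp
    ring
  · simp [substCoeff_shear, ha8]
  · obtain ⟨hi1, hi4⟩ := Finset.mem_Icc.1 hi
    rw [covKCoeff_substCoeff_shear h8 _ _ hi4]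
    refine Finset.sum_eq_zero fun j hj => ?_
    rw [hk (i + j) (by simp only [Finset.mem_range, Finset.mem_Icc] at hj ⊢; lia), mul_zero]

/-- The coefficients `a` are those of an octic with a root at infinity, normalized by `a 6 = 0`,
whose covariant `𝔨` is a multiple of `X⁴`. -/
structure IsNormalForm (a : ℕ → K) : Prop where
  six : a 6 = 0
  eight : a 8 = 0
  covKCoeff_eq_zero : ∀ i ∈ Finset.Icc 1 4, covKCoeff a i = 0

lemma exists_isNormalForm [IsAlgClosed K] (h8 : (Nat.factorial 8 : K) ≠ 0)
    {f : MvPolynomial (Fin 2) K} (hhom : f.IsHomogeneous 8) (hsf : Squarefree f)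
    (hf : OctahedralRelations f) :
    ∃ a, GLEquivalent f (binaryForm 8 a) ∧ IsNormalForm a := by
  obtain ⟨a, rfl⟩ := exists_eq_binaryForm h8 hhom
  obtain ⟨b, hab, hb2, hb3, hb4⟩ := exists_covKCoeff_triple_root h8 hf
  have hb1 := covKCoeff_one_eq_zero h8 (hab.squarefree hsf) (hab.octahedralRelations hf)
    hb2 hb3 hb4
  have hbk : ∀ i ∈ Finset.Icc 1 4, covKCoeff b i = 0 := fun i hi => by
    obtain ⟨hi1, hi4⟩ := Finset.mem_Icc.1 hi
    interval_cases i <;> assumption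
  obtain ⟨c, hbc, hc8, hck⟩ := exists_coeff_eight_eq_zero h8 (hab.octahedralRelations hf) hbk
  have hac := hab.trans hbc
  obtain ⟨d, hcd, hd6, hd8, hdk⟩ := exists_coeff_six_eq_zero h8 (hac.squarefree hsf) hc8 hck
  exact ⟨d, hac.trans hcd, hd6, hd8, hdk⟩

end Degeneration

section NormalForm

variable {R : Type*} [CommRing R]

/-- The coefficients of the octics to which the vanishing of `J₄, …, J₁₀` reduces `f`: those
in normal form with `a 7 = c`, `a 5 = 3βc` and `a 4 = 2γc`. -/
def normalFormCoeff (c β γ : R) : ℕ → R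
  | 0 => 12 * c * β ^ 2 * γ
  | 1 => -c * (765 * β ^ 3 + 50 * γ ^ 2)
  | 2 => -6 * c * β * γ
  | 3 => -15 * c * β ^ 2
  | 4 => 2 * c * γ
  | 5 => 3 * c * β
  | 7 => c
  | _ => 0

lemma normalForm_eq_of_discriminant_eq_zero (c s : R) :
    binaryForm 8 (normalFormCoeff c (-s ^ 2) (4 * s ^ 3)) =
      C (8 * c) * X 0 * (X 1 - C s * X 0) ^ 6 * (X 1 + C (6 * s) * X 0) := by
  rw [binaryForm_eight]
  simp only [normalFormCoeff, C_mul, C_add, C_neg, C_pow, map_ofNat, C_0]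
  ring

variable {K : Type*} [Field K]

lemma IsNormalForm.exists_eq_normalFormCoeff (h8 : (Nat.factorial 8 : K) ≠ 0) {a : ℕ → K}
    (ha : IsNormalForm a) (ha7 : a 7 ≠ 0) :
    ∃ β γ, binaryForm 8 a = binaryForm 8 (normalFormCoeff (a 7) β γ) := by
  have two_ne : (2 : K) ≠ 0 := ofNat_ne_zero_of_factorial_ne_zero h8 (by simp)
  have three_ne : (3 : K) ≠ 0 := ofNat_ne_zero_of_factorial_ne_zero h8 (by simp)
  have four_ne : (4 : K) ≠ 0 := ofNat_ne_zero_of_factorial_ne_zero h8 (by simp)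
  have five_ne : (5 : K) ≠ 0 := ofNat_ne_zero_of_factorial_ne_zero h8 (by simp)
  have hk1 := ha.covKCoeff_eq_zero 1 (by simp)
  have hk2 := ha.covKCoeff_eq_zero 2 (by simp)
  have hk3 := ha.covKCoeff_eq_zero 3 (by simp)
  have hk4 := ha.covKCoeff_eq_zero 4 (by simp)
  simp only [covKCoeff, ha.six, ha.eight, div_eq_zero_iff, three_ne, or_false] at hk1 hk2 hk3 hk4
  obtain ⟨β, h5⟩ : ∃ β, a 5 = 3 * a 7 * β := ⟨a 5 / (3 * a 7), by field_simp⟩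
  obtain ⟨γ, h4⟩ : ∃ γ, a 4 = 2 * a 7 * γ := ⟨a 4 / (2 * a 7), by field_simp⟩
  have h3 : a 3 = -15 * a 7 * β ^ 2 := by
    apply mul_left_cancel₀ (mul_ne_zero (mul_ne_zero three_ne four_ne) ha7)
    rw [h5] at hk4
    linear_combination -hk4
  have h2 : a 2 = -6 * a 7 * β * γ := by
    apply mul_left_cancel₀ (mul_ne_zero five_ne ha7)
    rw [h4, h5] at hk3
    linear_combination -hk3
  have h1 : a 1 = -a 7 * (765 * β ^ 3 + 50 * γ ^ 2) := by
    apply mul_left_cancel₀ (mul_ne_zero two_ne ha7)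
    rw [h3, h4, h5] at hk2
    linear_combination -hk2
  have h0 : a 0 = 12 * a 7 * β ^ 2 * γ := by
    apply mul_left_cancel₀ ha7
    rw [h2, h3, h4, h5] at hk1
    linear_combination hk1
  refine ⟨β, γ, binaryForm_congr fun i hi => ?_⟩
  interval_cases i
  exacts [h0, h1, h2, h3, h4, h5, ha.six, rfl, ha.eight]

lemma shJ2_normalForm (h8 : (Nat.factorial 8 : K) ≠ 0) (c β γ : K) :
    shJ2 (binaryForm 8 (normalFormCoeff c β γ)) = 1080 * c ^ 2 * (γ ^ 2 + 16 * β ^ 3) := by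
  rw [shJ2_binaryForm h8]
  simp only [contraction, Finset.sum_range_succ, Finset.sum_range_zero, Nat.choose, Nat.reduceAdd,
    Nat.reduceSub, normalFormCoeff]
  push_cast
  ring

lemma shJ3_normalForm (h8 : (Nat.factorial 8 : K) ≠ 0) (c β γ : K) :
    shJ3 (binaryForm 8 (normalFormCoeff c β γ)) =
      -6480 * c ^ 3 * γ * (γ ^ 2 + 16 * β ^ 3) := by
  have five_ne : (5 : K) ≠ 0 := ofNat_ne_zero_of_factorial_ne_zero h8 (by simp)
  have seven_ne : (7 : K) ≠ 0 := ofNat_ne_zero_of_factorial_ne_zero h8 (by simp)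
  rw [shJ3_binaryForm h8]
  simp only [contraction, Finset.sum_range_succ, Finset.sum_range_zero, Nat.choose, Nat.reduceAdd,
    Nat.reduceSub, normalFormCoeff, covGCoeff, show (35 : K) = 5 * 7 by norm_num]
  push_cast
  field_simp
  ring

lemma not_squarefree_normalForm (two_ne : (2 : K) ≠ 0) (c : K) {β γ : K}
    (h : γ ^ 2 + 16 * β ^ 3 = 0) : ¬Squarefree (binaryForm 8 (normalFormCoeff c β γ)) := by
  obtain ⟨s, rfl, rfl⟩ : ∃ s : K, β = -s ^ 2 ∧ γ = 4 * s ^ 3 := by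
    by_cases hβ : β = 0
    · have hγ : γ = 0 := by simpa [hβ] using h
      exact ⟨0, by simp [hβ], by simp [hγ]⟩
    · have four_ne : (4 : K) ≠ 0 := by
        rw [show (4 : K) = 2 ^ 2 by norm_num]
        exact pow_ne_zero 2 two_ne
      refine ⟨-γ / (4 * β), ?_, ?_⟩
      · field_simp
        linear_combination h
      · field_simp
        linear_combination γ * h
  intro hsf
  have hdvd : (X 1 - C s * X 0) * (X 1 - C s * X 0) ∣
      binaryForm 8 (normalFormCoeff c (-s ^ 2) (4 * s ^ 3)) := by
    rw [normalForm_eq_of_discriminant_eq_zero, ← pow_two]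
    exact Dvd.dvd.mul_right (Dvd.dvd.mul_left (pow_dvd_pow _ (by simp)) _) _
  simpa using (hsf _ hdvd).map constantCoeff

lemma normalForm_parameter_eq_zero (h8 : (Nat.factorial 8 : K) ≠ 0) {c β γ : K} (hc : c ≠ 0)
    (hsf : Squarefree (binaryForm 8 (normalFormCoeff c β γ)))
    (hrel : 30 * shJ3 (binaryForm 8 (normalFormCoeff c β γ)) ^ 2 =
      shJ2 (binaryForm 8 (normalFormCoeff c β γ)) ^ 3) : β = 0 ∧ γ ≠ 0 := by
  have two_ne : (2 : K) ≠ 0 := ofNat_ne_zero_of_factorial_ne_zero h8 (by simp)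
  have three_ne : (3 : K) ≠ 0 := ofNat_ne_zero_of_factorial_ne_zero h8 (by simp)
  have five_ne : (5 : K) ≠ 0 := ofNat_ne_zero_of_factorial_ne_zero h8 (by simp)
  have hD : γ ^ 2 + 16 * β ^ 3 ≠ 0 := fun h => not_squarefree_normalForm two_ne c h hsf
  have hβ : β = 0 := by
    rw [shJ2_normalForm h8, shJ3_normalForm h8] at hrel
    have hprod : 2 ^ 13 * 3 ^ 9 * 5 ^ 3 * c ^ 6 * (γ ^ 2 + 16 * β ^ 3) ^ 2 * β ^ 3 = 0 := by
      linear_combination -hrel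
    simpa [two_ne, three_ne, five_ne, hc, hD] using hprod
  refine ⟨hβ, fun hγ => hD ?_⟩
  rw [hβ, hγ]
  ring

end NormalForm

section Octahedral

/-- The octic `X⁸ + 14X⁴Z⁴ + Z⁸`, whose roots are the vertices of a cube inscribed in the sphere
`ℙ¹`. -/
noncomputable def octahedralForm (R : Type*) [CommRing R] : MvPolynomial (Fin 2) R :=
  X 0 ^ 8 + 14 * X 0 ^ 4 * X 1 ^ 4 + X 1 ^ 8

/-- The substitution moves two opposite vertices of the cube to zero and infinity; the rotations
of order three about this diagonal make the remaining factor a form in `x³` and `z³`. -/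
lemma octahedral_eq_of_pow_eq {A : Type*} [CommRing A] {e s : A} (he : 4 * e ^ 4 = -1)
    (hs : s ^ 2 = 3) (x z : A) :
    (e * ((s - 1) * z - (s + 1) * x)) ^ 8 +
        14 * (e * ((s - 1) * z - (s + 1) * x)) ^ 4 * (x + z) ^ 4 + (x + z) ^ 8 =
      48 * x * z * ((6 * s - 10) * z ^ 6 + 7 * x ^ 3 * z ^ 3 - (10 + 6 * s) * x ^ 6) := by
  set u := x + z with hu
  set q := (2 + s) * x ^ 2 - 2 * x * z + (2 - s) * z ^ 2 with hq
  have hpow : (e * ((s - 1) * z - (s + 1) * x)) ^ 4 = -q ^ 2 := by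
    have hsq : ((s - 1) * z - (s + 1) * x) ^ 2 = 2 * q := by
      rw [hq]; linear_combination (z - x) ^ 2 * hs
    calc (e * ((s - 1) * z - (s + 1) * x)) ^ 4
        = e ^ 4 * (((s - 1) * z - (s + 1) * x) ^ 2) ^ 2 := by ring
      _ = -q ^ 2 := by rw [hsq]; linear_combination q ^ 2 * he
  have hfst : q ^ 2 - u ^ 4 + 2 * s * q * u ^ 2 =
      4 * x * ((3 + 2 * s) * x ^ 3 + (2 * s - 6) * z ^ 3) := by
    rw [hu, hq]
    linear_combination (3 * x ^ 4 + 4 * x ^ 3 * z - 2 * x ^ 2 * z ^ 2 - 4 * x * z ^ 3 - z ^ 4) * hs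
  have hsnd : q ^ 2 - u ^ 4 - 2 * s * q * u ^ 2 =
      4 * z * ((3 - 2 * s) * z ^ 3 - (2 * s + 6) * x ^ 3) := by
    rw [hu, hq]
    linear_combination (-x ^ 4 - 4 * x ^ 3 * z - 2 * x ^ 2 * z ^ 2 + 4 * x * z ^ 3 + 3 * z ^ 4) * hs
  calc _ = ((e * ((s - 1) * z - (s + 1) * x)) ^ 4) ^ 2 +
        14 * (e * ((s - 1) * z - (s + 1) * x)) ^ 4 * u ^ 4 + u ^ 8 := by ring
    _ = (q ^ 2 - u ^ 4 + 2 * s * q * u ^ 2) * (q ^ 2 - u ^ 4 - 2 * s * q * u ^ 2) := by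
      rw [hpow]; linear_combination 4 * q ^ 2 * u ^ 4 * hs
    _ = _ := by
      rw [hfst, hsnd]
      linear_combination -64 * (x * z ^ 7 + 2 * x ^ 4 * z ^ 4 + x ^ 7 * z) * hs

variable {K : Type*} [Field K]

lemma exists_octahedral_scaling [IsAlgClosed K] (h8 : (Nat.factorial 8 : K) ≠ 0) {c s γ : K}
    (hs : s ^ 2 = 3) (hc : c ≠ 0) (hγ : γ ≠ 0) :
    ∃ p q : K, p ≠ 0 ∧ q ≠ 0 ∧ 6 * (6 * s - 10) * (p * q ^ 7) = c ∧
      12 * (p ^ 4 * q ^ 4) = 5 * c * γ ∧ 3 * (10 + 6 * s) * (p ^ 7 * q) = 25 * c * γ ^ 2 := by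
  have two_ne : (2 : K) ≠ 0 := ofNat_ne_zero_of_factorial_ne_zero h8 (by simp)
  have five_ne : (5 : K) ≠ 0 := ofNat_ne_zero_of_factorial_ne_zero h8 (by simp)
  have six_ne : (6 : K) ≠ 0 := ofNat_ne_zero_of_factorial_ne_zero h8 (by simp)
  have twelve_ne : (12 : K) ≠ 0 := by
    rw [show (12 : K) = 2 * 6 by norm_num]
    exact mul_ne_zero two_ne six_ne
  have hs10 : 6 * s - 10 ≠ 0 := fun h => pow_ne_zero 3 two_ne <| by
    linear_combination (6 * s + 10) * h - 36 * hs
  obtain ⟨w, hw⟩ := IsAlgClosed.exists_pow_nat_eq (5 * c * γ / 12) four_pos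
  have hw0 : w ≠ 0 := ne_zero_pow four_ne_zero (by simp [hw, five_ne, hc, hγ, twelve_ne])
  obtain ⟨q, hq⟩ := IsAlgClosed.exists_pow_nat_eq (c / (6 * (6 * s - 10) * w)) (n := 6) (by simp)
  have hq0 : q ≠ 0 := ne_zero_pow (n := 6) (by simp) (by simp [hq, hc, six_ne, hs10, hw0])
  obtain ⟨p, rfl⟩ : ∃ p, w = p * q := ⟨w / q, by field_simp⟩
  have hfst : 6 * (6 * s - 10) * (p * q ^ 7) = c := by
    rw [eq_div_iff (mul_ne_zero (mul_ne_zero six_ne hs10) hw0)] at hq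
    linear_combination hq
  have hmid : 12 * (p ^ 4 * q ^ 4) = 5 * c * γ := by
    field_simp at hw
    linear_combination hw
  refine ⟨p, q, left_ne_zero_of_mul hw0, hq0, hfst, hmid, mul_left_cancel₀ hc ?_⟩
  linear_combination (12 * (p ^ 4 * q ^ 4) + 5 * c * γ) * hmid
    - 3 * (10 + 6 * s) * (p ^ 7 * q) * hfst + 648 * p ^ 8 * q ^ 8 * hs

lemma linearSubst_octahedralForm {e s : K} (he : 4 * e ^ 4 = -1) (hs : s ^ 2 = 3) (p q : K) :
    linearSubst !![-e * (s + 1) * p, e * (s - 1) * q; p, q] (octahedralForm K) =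
      C (48 * (6 * s - 10) * (p * q ^ 7)) * X 0 * X 1 ^ 7 +
        C (336 * (p ^ 4 * q ^ 4)) * X 0 ^ 4 * X 1 ^ 4 -
        C (48 * (10 + 6 * s) * (p ^ 7 * q)) * X 0 ^ 7 * X 1 := by
  have he' : 4 * C e ^ 4 = (-1 : MvPolynomial (Fin 2) K) := by
    rw [← C_pow, ← map_ofNat C, ← C_mul, he, C_neg, C_1]
  have hs' : C s ^ 2 = (3 : MvPolynomial (Fin 2) K) := by rw [← C_pow, hs, map_ofNat]
  simp only [octahedralForm, map_add, map_mul, map_pow, map_ofNat, linearSubst_X, Matrix.of_apply,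
    Matrix.cons_val', Matrix.cons_val_zero, Matrix.cons_val_one, Matrix.cons_val_fin_one, C_sub,
    C_neg, C_1]
  linear_combination octahedral_eq_of_pow_eq he' hs' (C p * X 0) (C q * X 1)

lemma glEquivalent_octahedralForm_of_parameter_eq_zero [IsAlgClosed K]
    (h8 : (Nat.factorial 8 : K) ≠ 0) {c γ : K} (hc : c ≠ 0) (hγ : γ ≠ 0) :
    GLEquivalent (binaryForm 8 (normalFormCoeff c 0 γ)) (octahedralForm K) := by
  have two_ne : (2 : K) ≠ 0 := ofNat_ne_zero_of_factorial_ne_zero h8 (by simp)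
  have three_ne : (3 : K) ≠ 0 := ofNat_ne_zero_of_factorial_ne_zero h8 (by simp)
  have four_ne : (4 : K) ≠ 0 := ofNat_ne_zero_of_factorial_ne_zero h8 (by simp)
  obtain ⟨e, he⟩ := IsAlgClosed.exists_pow_nat_eq (-1 / 4 : K) four_pos
  obtain ⟨s, hs⟩ := IsAlgClosed.exists_pow_nat_eq (3 : K) two_pos
  have he0 : e ≠ 0 := ne_zero_pow four_ne_zero (by simp [he, four_ne])
  have hs0 : s ≠ 0 := ne_zero_pow two_ne_zero (by simp [hs, three_ne])
  obtain ⟨p, q, hp, hq, hfst, hmid, hlast⟩ := exists_octahedral_scaling h8 hs hc hγ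
  refine ⟨!![-e * (s + 1) * p, e * (s - 1) * q; p, q], ?_, ?_⟩
  · rw [Matrix.det_fin_two_of, isUnit_iff_ne_zero,
      show -e * (s + 1) * p * q - e * (s - 1) * q * p = -(2 * e * s * p * q) by ring]
    simp [two_ne, he0, hs0, hp, hq]
  · rw [linearSubst_octahedralForm (by rw [he, mul_div_cancel₀ _ four_ne]) hs,
      show 48 * (6 * s - 10) * (p * q ^ 7) = 8 * c by linear_combination 8 * hfst,
      show 336 * (p ^ 4 * q ^ 4) = 140 * c * γ by linear_combination 28 * hmid,
      show 48 * (10 + 6 * s) * (p ^ 7 * q) = 400 * c * γ ^ 2 by linear_combination 16 * hlast,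
      binaryForm_eight]
    simp only [normalFormCoeff, C_mul, C_add, C_neg, C_pow, map_ofNat, C_0]
    ring

theorem OctahedralRelations.glEquivalent_octahedralForm [IsAlgClosed K]
    (h8 : (Nat.factorial 8 : K) ≠ 0) {f : MvPolynomial (Fin 2) K} (hhom : f.IsHomogeneous 8)
    (hsf : Squarefree f) (hf : OctahedralRelations f) : GLEquivalent f (octahedralForm K) := by
  obtain ⟨a, hfa, ha⟩ := exists_isNormalForm h8 hhom hsf hf
  have ha7 : a 7 ≠ 0 := coeff_ne_zero_of_squarefree (hfa.squarefree hsf) ha.eight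
  obtain ⟨β, γ, hβγ⟩ := ha.exists_eq_normalFormCoeff h8 ha7
  rw [hβγ] at hfa
  obtain ⟨rfl, hγ⟩ := normalForm_parameter_eq_zero h8 ha7 (hfa.squarefree hsf)
    (hfa.octahedralRelations hf).rel
  exact hfa.trans (glEquivalent_octahedralForm_of_parameter_eq_zero h8 ha7 hγ)

/-- The coefficients of `octahedralForm`; only `a 4` carries a nontrivial binomial weight. -/
def octahedralCoeff : ℕ → K
  | 0 => 1
  | 4 => 1 / 5
  | 8 => 1
  | _ => 0

lemma octahedralForm_eq_binaryForm (h8 : (Nat.factorial 8 : K) ≠ 0) :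
    octahedralForm K = binaryForm 8 octahedralCoeff := by
  have five_ne : (5 : K) ≠ 0 := ofNat_ne_zero_of_factorial_ne_zero h8 (by simp)
  have h70 : (70 : K) * (1 / 5) = 14 := by field_simp; norm_num
  rw [binaryForm_eight, octahedralForm]
  simp only [octahedralCoeff, h70, mul_zero, C_1, C_0, map_ofNat]
  ring

lemma covK_octahedralForm (h8 : (Nat.factorial 8 : K) ≠ 0) : covK (octahedralForm K) = 0 := by
  have five_ne : (5 : K) ≠ 0 := ofNat_ne_zero_of_factorial_ne_zero h8 (by simp)
  rw [octahedralForm_eq_binaryForm h8, covK_binaryForm_eq_zero_iff h8]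
  intro i hi
  interval_cases i <;> simp [covKCoeff, octahedralCoeff]
  field_simp
  norm_num

lemma rel_octahedralForm (h8 : (Nat.factorial 8 : K) ≠ 0) :
    30 * shJ3 (octahedralForm K) ^ 2 = shJ2 (octahedralForm K) ^ 3 := by
  have five_ne : (5 : K) ≠ 0 := ofNat_ne_zero_of_factorial_ne_zero h8 (by simp)
  have seven_ne : (7 : K) ≠ 0 := ofNat_ne_zero_of_factorial_ne_zero h8 (by simp)
  rw [octahedralForm_eq_binaryForm h8, shJ2_binaryForm h8, shJ3_binaryForm h8]
  simp only [contraction, Finset.sum_range_succ, Finset.sum_range_zero, Nat.choose, Nat.reduceAdd,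
    Nat.reduceSub, octahedralCoeff, covGCoeff, show (35 : K) = 5 * 7 by norm_num]
  push_cast
  field_simp
  norm_num

lemma invariants_eq_zero_of_covK_eq_zero {f : MvPolynomial (Fin 2) K} (hk : covK f = 0) :
    shJ4 f = 0 ∧ shJ5 f = 0 ∧ shJ6 f = 0 ∧ shJ7 f = 0 ∧ shJ8 f = 0 ∧ shJ9 f = 0 ∧ shJ10 f = 0 := by
  have hh : covH f = 0 := by rw [covH, hk, transvectant_zero_left]
  simp only [shJ4, shJ5, shJ6, shJ7, shJ8, shJ9, shJ10, hk, hh, transvectant_zero_right, map_zero,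
    and_self]

theorem GLEquivalent.invariants_of_octahedralForm (h8 : (Nat.factorial 8 : K) ≠ 0)
    {f : MvPolynomial (Fin 2) K} (hf : GLEquivalent f (octahedralForm K)) :
    30 * shJ3 f ^ 2 = shJ2 f ^ 3 ∧ shJ4 f = 0 ∧ shJ5 f = 0 ∧ shJ6 f = 0 ∧
      shJ7 f = 0 ∧ shJ8 f = 0 ∧ shJ9 f = 0 ∧ shJ10 f = 0 := by
  obtain ⟨M, -, rfl⟩ := hf
  refine ⟨rel_linearSubst M (rel_octahedralForm h8), invariants_eq_zero_of_covK_eq_zero ?_⟩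
  rw [covK_linearSubst, covK_octahedralForm h8, map_zero, mul_zero]

end Octahedral

/-- Identification of the stratum `C₂ × S₄`: a squarefree binary octic `f` over an
algebraically closed field of characteristic `0` or `≥ 11` satisfies `30·J₃² = J₂³` and
`J₄ = J₅ = ⋯ = J₁₀ = 0` iff `f` is `GL₂(K)`-equivalent to `X⁸ + 14·X⁴Z⁴ + Z⁸`; equivalently
the genus-3 curve `y² = f(x,1)` has automorphism group `C₂ × S₄` iff these relations hold,
and such a curve is `K`-isomorphic to `y² = x⁸ + 14x⁴ + 1`. -/
theorem statement15 {K : Type*} [Field K] [IsAlgClosed K]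
    (hchar : ringChar K = 0 ∨ 11 ≤ ringChar K)
    (f : MvPolynomial (Fin 2) K) (hf : f.IsHomogeneous 8) (hsf : Squarefree f) :
    (30 * shJ3 f ^ 2 = shJ2 f ^ 3 ∧ shJ4 f = 0 ∧ shJ5 f = 0 ∧ shJ6 f = 0 ∧
      shJ7 f = 0 ∧ shJ8 f = 0 ∧ shJ9 f = 0 ∧ shJ10 f = 0) ↔
    ∃ M : Matrix (Fin 2) (Fin 2) K, IsUnit M.det ∧
      f = bind₁ (fun j : Fin 2 => C (M j 0) * X 0 + C (M j 1) * X 1)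
        (X 0 ^ 8 + 14 * X 0 ^ 4 * X 1 ^ 4 + X 1 ^ 8) := by
  have h8 := factorial_eight_ne_zero_of_ringChar hchar
  constructor
  · rintro ⟨hrel, h4, h5, h6, h7, -, h9, -⟩
    exact OctahedralRelations.glEquivalent_octahedralForm h8 hf hsf ⟨hrel, h4, h5, h6, h7, h9⟩
  · exact GLEquivalent.invariants_of_octahedralForm h8
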